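/- arXiv:1705.06372 — 6 statements merged into one kernel-verified Lean document; each statement's English description precedes it below -/
import Mathlib

section
/- Let q = 2^h with h ≥ 4 and let A be the point set of PG(2,q) produced by the q/8-construction from F_2-independent α₁, α₂, α₃ ∈ F_q \ {0} and β₁, β₂, β₃ ∈ F_q \ {0} with Tr(α_i β_j) = δ_ij. If q > 16, then A is a KM-arc of type q/8 in PG(2,q) whose q/8-nucleus is (0:0:1) and which is an elation KM-arc with elation line X = 0 (for every α ∈ F_q the set {z : (1:α:z) ∈ A} is empty or a coset of S). If q = 16, then A is a hyperoval of PG(2,16), i.e. a set of 18 points meeting every line in 0 or 2 points, stabilised by a non-trivial elation with axis X = 0. -/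
open scoped Classical

noncomputable section

variable {K : Type*} [Field K]

/-- The absolute trace-style sum `x + x² + x⁴ + ⋯ + x^(2^(h-1))`
(it lands in the prime subfield `F₂` when `|K| = 2^h`). -/
def Tr (h : ℕ) (x : K) : K := ∑ i ∈ Finset.range h, x ^ 2 ^ i

/-- `F₂`-independence of a tuple of elements of a field of characteristic two:
no nontrivial combination with coefficients `0`/`1` vanishes. -/
def F2Indep {n : ℕ} (v : Fin n → K) : Prop :=
  ∀ c : Fin n → K, (∀ i, c i = 0 ∨ c i = 1) → ∑ i, c i * v i = 0 → ∀ i, c i = 0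

/-- The `F₂`-span of a tuple of elements of a field of characteristic two. -/
def F2Span {n : ℕ} (v : Fin n → K) : Set K :=
  {x | ∃ c : Fin n → K, (∀ i, c i = 0 ∨ c i = 1) ∧ x = ∑ i, c i * v i}

/-- `α·S` for an additive subgroup `S` of the field. -/
def smulSub (α : K) (S : AddSubgroup K) : AddSubgroup K :=
  S.map (AddMonoidHom.mulLeft α)

/-- Points of `PG(2,q)`: one-dimensional subspaces of `K³`. -/
abbrev Pt (K : Type*) [Field K] := Projectivization K (Fin 3 → K)

/-- The point `(a : b : c)` of `PG(2,q)`. -/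
def pt3 (a b c : K) (habc : ¬(a = 0 ∧ b = 0 ∧ c = 0)) : Pt K :=
  Projectivization.mk K ![a, b, c] (fun h0 => habc
    ⟨by simpa using congrFun h0 0, by simpa using congrFun h0 1, by simpa using congrFun h0 2⟩)

/-- The point `(a : b)` of `PG(1,q)`. -/
def pt2 (a b : K) (hab : ¬(a = 0 ∧ b = 0)) : Projectivization K (Fin 2 → K) :=
  Projectivization.mk K ![a, b] (fun h0 => hab
    ⟨by simpa using congrFun h0 0, by simpa using congrFun h0 1⟩)

/-- An `F₂`-linear set of points of `PG(1,q)`: in characteristic two, the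
`F₂`-subspaces of `K²` are exactly its additive subgroups. -/
def IsF2Linear (T : Set (Projectivization K (Fin 2 → K))) : Prop :=
  ∃ U : AddSubgroup (Fin 2 → K),
    T = {P | ∃ u : Fin 2 → K, ∃ hu : u ≠ 0, u ∈ U ∧ Projectivization.mk K u hu = P}

/-- Lines of `PG(2,q)`: two-dimensional subspaces of `K³`. -/
def IsLine (L : Submodule K (Fin 3 → K)) : Prop := Module.finrank K L = 2

/-- Incidence of a point with a line. -/
def OnLine (P : Pt K) (L : Submodule K (Fin 3 → K)) : Prop := P.submodule ≤ L

/-- The number of points of `A` lying on the line `L`. -/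
def secantCount (A : Set (Pt K)) (L : Submodule K (Fin 3 → K)) : ℕ :=
  {P ∈ A | OnLine P L}.ncard

/-- A KM-arc of type `t`: `q+t` points meeting every line in `0`, `2` or `t` points. -/
def IsKMArc (q t : ℕ) (A : Set (Pt K)) : Prop :=
  A.ncard = q + t ∧ ∀ L : Submodule K (Fin 3 → K), IsLine L →
    secantCount A L = 0 ∨ secantCount A L = 2 ∨ secantCount A L = t

/-- The projectivity of `PG(2,q)` induced by an element of `GL(3,q)`. -/
def projMap (f : (Fin 3 → K) ≃ₗ[K] (Fin 3 → K)) : Pt K → Pt K :=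
  Projectivization.map f.toLinearMap f.injective

/-- `f` induces an elation with axis `L` and centre `R`: it fixes every point of `L`
and maps every line through `R` to itself. -/
def IsElation (f : (Fin 3 → K) ≃ₗ[K] (Fin 3 → K)) (L : Submodule K (Fin 3 → K))
    (R : Pt K) : Prop :=
  IsLine L ∧ OnLine R L ∧ (∀ P : Pt K, OnLine P L → projMap f P = P) ∧
    ∀ M : Submodule K (Fin 3 → K), IsLine M → OnLine R M →
      ∀ P : Pt K, OnLine P M → OnLine (projMap f P) M

/-- `f` induces an elation with axis `L` (for some centre on `L`). -/
def IsElationAxis (f : (Fin 3 → K) ≃ₗ[K] (Fin 3 → K)) (L : Submodule K (Fin 3 → K)) : Prop :=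
  ∃ R : Pt K, IsElation f L R

/-- The projectivity induced by `f` stabilises the point set `A`. -/
def Stabilises (f : (Fin 3 → K) ≃ₗ[K] (Fin 3 → K)) (A : Set (Pt K)) : Prop :=
  projMap f '' A = A

/-- `N` lies on every `t`-secant of `A` (i.e. `N` is the `t`-nucleus). -/
def IsNucleus (t : ℕ) (A : Set (Pt K)) (N : Pt K) : Prop :=
  ∀ L : Submodule K (Fin 3 → K), IsLine L → secantCount A L = t → OnLine N L

/-- An elation KM-arc of type `t` with `t`-nucleus `N` and elation line `linf`:
for every `t`-secant `L ≠ linf`, the group of elations with axis `linf` stabilising `A`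
acts transitively on `A ∩ L`. -/
def IsElationKMArc (q t : ℕ) (A : Set (Pt K)) (N : Pt K)
    (linf : Submodule K (Fin 3 → K)) : Prop :=
  IsKMArc q t A ∧ IsLine linf ∧ OnLine N linf ∧ IsNucleus t A N ∧
    ∀ L : Submodule K (Fin 3 → K), IsLine L → secantCount A L = t → L ≠ linf →
      ∀ P ∈ A, OnLine P L → ∀ Q ∈ A, OnLine Q L →
        ∃ f : (Fin 3 → K) ≃ₗ[K] (Fin 3 → K),
          IsElationAxis f linf ∧ Stabilises f A ∧ projMap f P = Q

/-- A translation KM-arc with translation line `l`: the group of elations with axis `l`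
stabilising `A` acts transitively on `A \ l`. -/
def IsTranslationKMArc (A : Set (Pt K)) (l : Submodule K (Fin 3 → K)) : Prop :=
  IsLine l ∧ ∀ P ∈ A, ¬OnLine P l → ∀ Q ∈ A, ¬OnLine Q l →
    ∃ f : (Fin 3 → K) ≃ₗ[K] (Fin 3 → K),
      IsElationAxis f l ∧ Stabilises f A ∧ projMap f P = Q

/-- The line `X = 0` of `PG(2,q)`. -/
def lineX0 (K : Type*) [Field K] : Submodule K (Fin 3 → K) :=
  LinearMap.ker (LinearMap.proj (R := K) (φ := fun _ : Fin 3 => K) 0)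

/-- The line `Y = aX` of `PG(2,q)`. -/
def lineYaX (a : K) : Submodule K (Fin 3 → K) where
  carrier := {v | v 1 = a * v 0}
  add_mem' := by
    intro v w hv hw
    simp only [Set.mem_setOf_eq, Pi.add_apply] at hv hw ⊢
    rw [hv, hw]; ring
  zero_mem' := by simp
  smul_mem' := by
    intro c v hv
    simp only [Set.mem_setOf_eq, Pi.smul_apply, smul_eq_mul] at hv ⊢
    rw [hv]; ring

/-- The point set of the `q/8`-construction (Theorem 4.4 of the paper), built from
`F₂`-independent `a 0, a 1, a 2` and coset representatives `b 0, b 1, b 2`. -/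
def q8Arc (h : ℕ) (a b : Fin 3 → K) : Set (Pt K) :=
  {P | ∃ x : K, (∀ i, Tr h (a i ^ 2 * x) = 0) ∧ P = pt3 0 1 x (by simp)}
    ∪ {P | ∃ l : Fin 3 → K, (∀ i, l i = 0 ∨ l i = 1) ∧ ∃ s : K, (∀ i, Tr h (a i * s) = 0) ∧
        P = pt3 1 (l 0 * a 0 + l 1 * a 1 + l 2 * a 2)
          ((l 0 + l 1 + l 2 + l 1 * l 2) * b 0 + (l 1 + l 2 + l 0 * l 2) * b 1
            + (l 2 + l 0 * l 1) * b 2 + s) (by simp)}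

/-- The point set of the `q/16`-construction (Theorem 5.2 of the paper). -/
def q16Arc (h : ℕ) (a : Fin 4 → K) (α : K) (b : Fin 3 → K) : Set (Pt K) :=
  {P | ∃ x : K, Tr h (a 0 * (a 0 + a 3) * x) = 0 ∧ Tr h (a 1 * (a 1 + a 3) * x) = 0 ∧
      Tr h (a 2 * (a 2 + a 3) * x) = 0 ∧ Tr h (a 3 * α * x) = 1 ∧ P = pt3 0 1 x (by simp)}
    ∪ {P | ∃ l : Fin 4 → K, (∀ i, l i = 0 ∨ l i = 1) ∧ ∃ s : K, (∀ i, Tr h (a i * s) = 0) ∧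
        P = pt3 1 (l 0 * a 0 + l 1 * a 1 + l 2 * a 2 + l 3 * a 3)
          ((l 0 + l 1 + l 2 + l 1 * l 2) * b 0 + (l 1 + l 2 + l 0 * l 2) * b 1
            + (l 2 + l 0 * l 1) * b 2 + s) (by simp)}

/-- The semilinear collineation of `PG(2,q)` sending the point spanned by `v`
to the point spanned by `M (ψ ∘ v)`. -/
def frobMap (ψ : K ≃+* K) (M : (Fin 3 → K) ≃ₗ[K] (Fin 3 → K)) (P : Pt K) : Pt K :=
  Projectivization.mk K (M fun i => ψ (P.rep i)) (by
    rw [LinearEquiv.map_ne_zero_iff]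
    intro h0
    apply P.rep_nonzero
    funext i
    have h2 : P.rep i = 0 := ψ.injective (by rw [map_zero]; exact congrFun h0 i)
    simpa using h2)

namespace Q8

/-- The finite check behind the construction. -/
theorem finite_check : ∀ m00 m01 m02 m11 m12 m22 k0 k1 k2 : ZMod 2,
    (if m00 = 0 ∧ m11 = 0 ∧ m22 = 0 then 1 else 0) +
      (Finset.univ.filter (fun v : ZMod 2 × ZMod 2 × ZMod 2 =>
        m00 * v.1 + m01 * v.2.1 + m02 * v.2.2 + k0 = v.1 + v.2.1 + v.2.2 + v.2.1 * v.2.2 ∧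
        m01 * v.1 + m11 * v.2.1 + m12 * v.2.2 + k1 = v.2.1 + v.2.2 + v.1 * v.2.2 ∧
        m02 * v.1 + m12 * v.2.1 + m22 * v.2.2 + k2 = v.2.2 + v.1 * v.2.1)).card = 0 ∨
    (if m00 = 0 ∧ m11 = 0 ∧ m22 = 0 then 1 else 0) +
      (Finset.univ.filter (fun v : ZMod 2 × ZMod 2 × ZMod 2 =>
        m00 * v.1 + m01 * v.2.1 + m02 * v.2.2 + k0 = v.1 + v.2.1 + v.2.2 + v.2.1 * v.2.2 ∧
        m01 * v.1 + m11 * v.2.1 + m12 * v.2.2 + k1 = v.2.1 + v.2.2 + v.1 * v.2.2 ∧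
        m02 * v.1 + m12 * v.2.1 + m22 * v.2.2 + k2 = v.2.2 + v.1 * v.2.1)).card = 2 := by
  simp only [Finset.card_filter, Fintype.sum_prod_type]
  decide +kernel

section
variable {K : Type*} [Field K] [Fintype K]

theorem charTwo {h : ℕ} (hcard : Fintype.card K = 2 ^ h) : CharP K 2 := by
  obtain ⟨p, hp⟩ := CharP.exists K
  have hpp : Fact p.Prime := ⟨CharP.char_is_prime K p⟩
  obtain ⟨n, hn, hc⟩ := FiniteField.card K p
  rw [hcard] at hc
  have : p ∣ 2 ^ h := by rw [hc]; exact dvd_pow_self p n.ne_zero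
  have := hpp.1.dvd_of_dvd_pow this
  rw [Nat.prime_dvd_prime_iff_eq hpp.1 Nat.prime_two] at this
  subst this; exact hp

theorem Tr_add [CharP K 2] (h : ℕ) (x y : K) : Tr h (x + y) = Tr h x + Tr h y := by
  unfold Tr
  rw [← Finset.sum_add_distrib]
  exact Finset.sum_congr rfl fun i _ => add_pow_char_pow x y 2 i

theorem Tr_sq' [CharP K 2] (h : ℕ) (x : K) : Tr h (x ^ 2) = (Tr h x) ^ 2 := by
  unfold Tr
  rw [sum_pow_char 2]
  exact Finset.sum_congr rfl fun i _ => by rw [← pow_mul, ← pow_mul, mul_comm]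

theorem Tr_sq [CharP K 2] {h : ℕ} (hcard : Fintype.card K = 2 ^ h) (x : K) :
    Tr h (x ^ 2) = Tr h x := by
  have h1 : ∑ i ∈ Finset.range (h + 1), x ^ 2 ^ i = Tr h x + x := by
    rw [Finset.sum_range_succ, ← hcard, FiniteField.pow_card]; rfl
  have h2 : ∑ i ∈ Finset.range (h + 1), x ^ 2 ^ i = Tr h (x ^ 2) + x := by
    rw [Finset.sum_range_succ']
    simp only [Tr, pow_zero, pow_one, ← pow_mul, ← pow_succ']
  exact add_right_cancel (h2.symm.trans h1)

/-- The embedding of the prime field. -/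
def phi [CharP K 2] : ZMod 2 →+* K := ZMod.castHom (dvd_refl 2) K

theorem phi_inj [CharP K 2] {x y : ZMod 2} : (phi x : K) = phi y ↔ x = y :=
  (phi (K := K)).injective.eq_iff

theorem exists_T [CharP K 2] {h : ℕ} (hcard : Fintype.card K = 2 ^ h) :
    ∃ T : K →+ ZMod 2, ∀ x, phi (T x) = Tr h x := by
  have key : ∀ x : K, ∃ t : ZMod 2, phi t = Tr h x := by
    intro x
    have := Tr_sq' h x
    rw [Tr_sq hcard] at this
    have : Tr h x * (Tr h x - 1) = 0 := by linear_combination -this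
    rcases mul_eq_zero.1 this with h0 | h0
    · exact ⟨0, by rw [h0, map_zero]⟩
    · exact ⟨1, by rw [map_one]; exact (sub_eq_zero.1 h0).symm⟩
  choose T hT using key
  refine ⟨AddMonoidHom.mk' T fun x y => ?_, hT⟩
  rw [← phi_inj (K := K), map_add, hT, hT, hT, Tr_add]

theorem phi_zero_or_one [CharP K 2] (t : ZMod 2) : (phi t : K) = 0 ∨ (phi t : K) = 1 := by
  fin_cases t
  · left; exact map_zero _
  · right; exact map_one _

theorem exists_phi [CharP K 2] {x : K} (hx : x = 0 ∨ x = 1) : ∃ t : ZMod 2, phi t = x := by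
  rcases hx with rfl | rfl
  · exact ⟨0, map_zero _⟩
  · exact ⟨1, map_one _⟩

theorem T_phi_mul [CharP K 2] (T : K →+ ZMod 2) (t : ZMod 2) (x : K) : T (phi t * x) = t * T x := by
  have : t = 0 ∨ t = 1 := by revert t; decide
  rcases this with rfl | rfl <;> simp

end

section
variable {K : Type*} [Field K]

theorem onLine_pt3 {x y z : K} {hn} (L : Submodule K (Fin 3 → K)) :
    OnLine (pt3 x y z hn) L ↔ ![x, y, z] ∈ L := by
  unfold OnLine pt3
  rw [Projectivization.submodule_mk, Submodule.span_singleton_le_iff_mem]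

theorem pt3_eq {x y z x' y' z' : K} {hn hn'} :
    pt3 x y z hn = pt3 x' y' z' hn' ↔ ∃ c : K, c ≠ 0 ∧ c * x' = x ∧ c * y' = y ∧ c * z' = z := by
  unfold pt3
  rw [Projectivization.mk_eq_mk_iff']
  constructor
  · rintro ⟨c, hc⟩
    have h0 := congrFun hc 0
    have h1 := congrFun hc 1
    have h2 := congrFun hc 2
    simp at h0 h1 h2
    refine ⟨c, ?_, h0, h1, h2⟩
    rintro rfl
    exact hn ⟨by simpa using h0.symm, by simpa using h1.symm, by simpa using h2.symm⟩
  · rintro ⟨c, _, h0, h1, h2⟩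
    refine ⟨c, ?_⟩
    ext i; fin_cases i <;> simp [h0, h1, h2]

theorem pt3_1_eq {y z y' z' : K} {hn hn'} :
    pt3 1 y z hn = pt3 1 y' z' hn' ↔ y = y' ∧ z = z' := by
  rw [pt3_eq]
  constructor
  · rintro ⟨c, _, h0, h1, h2⟩
    rw [mul_one] at h0; subst h0
    simp at h1 h2; exact ⟨h1.symm, h2.symm⟩
  · rintro ⟨rfl, rfl⟩; exact ⟨1, by simp⟩

theorem pt3_01_eq {z z' : K} {hn hn'} :
    pt3 0 1 z hn = pt3 0 1 z' hn' ↔ z = z' := by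
  rw [pt3_eq]
  constructor
  · rintro ⟨c, _, h0, h1, h2⟩
    rw [mul_one] at h1; subst h1
    simp at h2; exact h2.symm
  · rintro rfl; exact ⟨1, by simp⟩

theorem pt3_0_ne_1 {x y z w : K} {hn hn'} : pt3 0 x y hn ≠ pt3 1 z w hn' := by
  rw [Ne, pt3_eq]
  rintro ⟨c, hc, h0, _⟩
  simp at h0; exact hc h0

theorem pt3_00_ne_01 {y w : K} {hn hn'} : pt3 0 0 y hn ≠ pt3 0 1 w hn' := by
  rw [Ne, pt3_eq]
  rintro ⟨c, hc, _, h0, _⟩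
  simp at h0; exact hc h0

theorem pt_cases (P : Pt K) : (∃ y z, P = pt3 1 y z (by simp)) ∨ (∃ z, P = pt3 0 1 z (by simp)) ∨
    P = pt3 0 0 1 (by simp) := by
  induction P using Projectivization.ind with
  | h v hv =>
  have hP : Projectivization.mk K v hv = pt3 (v 0) (v 1) (v 2) (by
      rintro ⟨h0, h1, h2⟩; apply hv; ext i; fin_cases i <;> simp [h0, h1, h2]) := by
    unfold pt3; congr 1; ext i; fin_cases i <;> rfl
  rw [hP]
  by_cases h0 : v 0 = 0
  · by_cases h1 : v 1 = 0
    · right; right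
      have h2 : v 2 ≠ 0 := by
        intro h2; apply hv; ext i; fin_cases i <;> simp [h0, h1, h2]
      rw [pt3_eq]; exact ⟨v 2, h2, by simp [h0, h1]⟩
    · right; left
      refine ⟨v 2 / v 1, ?_⟩
      rw [pt3_eq]; exact ⟨v 1, h1, by simp [h0], by simp, by field_simp⟩
  · left
    refine ⟨v 1 / v 0, v 2 / v 0, ?_⟩
    rw [pt3_eq]; exact ⟨v 0, h0, by simp, by field_simp, by field_simp⟩

theorem mem_lineX0 {v : Fin 3 → K} : v ∈ lineX0 K ↔ v 0 = 0 := by simp [lineX0]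

theorem mem_lineYaX {a : K} {v : Fin 3 → K} : v ∈ lineYaX a ↔ v 1 = a * v 0 := Iff.rfl

theorem ker_isLine (f : (Fin 3 → K) →ₗ[K] K) (hf : f ≠ 0) : IsLine (LinearMap.ker f) := by
  have h1 := f.finrank_range_add_finrank_ker
  rw [LinearMap.range_eq_top.2 (LinearMap.surjective hf), finrank_top, Module.finrank_self,
    Module.finrank_fin_fun] at h1
  unfold IsLine; omega

theorem isLine_X0 : IsLine (lineX0 K) := by
  apply ker_isLine
  intro h0
  have := LinearMap.congr_fun h0 (fun _ => 1)
  simp at this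

theorem line_cases (L : Submodule K (Fin 3 → K)) (hL : IsLine L) :
    L = lineX0 K ∨ (∃ a, L = lineYaX a) ∨ ∃ m k : K, ∀ v, v ∈ L ↔ v 2 = m * v 1 + k * v 0 := by
  have hlt : L < ⊤ := by
    rw [lt_top_iff_ne_top]; rintro rfl
    unfold IsLine at hL; rw [finrank_top, Module.finrank_fin_fun] at hL; omega
  obtain ⟨f, hf, hle⟩ := Submodule.exists_le_ker_of_lt_top L hlt
  have hLf : L = LinearMap.ker f := by
    apply Submodule.eq_of_le_of_finrank_eq hle
    rw [ker_isLine f hf, hL]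
  have hform : ∀ v, f v = f ![1,0,0] * v 0 + f ![0,1,0] * v 1 + f ![0,0,1] * v 2 := by
    intro v
    have : v = v 0 • ![1,0,0] + v 1 • ![0,1,0] + v 2 • ![0,0,1] := by
      ext i; fin_cases i <;> simp
    conv_lhs => rw [this]
    simp only [map_add, map_smul, smul_eq_mul]; ring
  have hmem : ∀ v, v ∈ L ↔ f ![1,0,0] * v 0 + f ![0,1,0] * v 1 + f ![0,0,1] * v 2 = 0 := by
    intro v; rw [hLf, LinearMap.mem_ker, hform]
  generalize f ![1,0,0] = p at hmem hform
  generalize f ![0,1,0] = q at hmem hform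
  generalize f ![0,0,1] = r at hmem hform
  by_cases hr : r = 0
  · by_cases hq : q = 0
    · left
      have hp : p ≠ 0 := by
        rintro rfl; refine hf (LinearMap.ext fun v => ?_); simp [hform, hr, hq]
      ext v; rw [hmem, mem_lineX0]; simp [hr, hq, hp]
    · right; left
      refine ⟨- p / q, ?_⟩
      ext v; rw [hmem, mem_lineYaX, hr]
      constructor
      · intro hv; field_simp; linear_combination hv
      · intro hv; rw [hv]; field_simp; ring
  · right; right
    refine ⟨- q / r, - p / r, fun v => ?_⟩
    rw [hmem]
    constructor
    · intro hv; field_simp; linear_combination hv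
    · intro hv; rw [hv]; field_simp; ring

/-- The elation `(x,y,z) ↦ (x,y,z+sx)`. -/
def el (s : K) : (Fin 3 → K) ≃ₗ[K] (Fin 3 → K) :=
  LinearEquiv.ofLinearMap
    { toFun := fun v => ![v 0, v 1, v 2 + s * v 0]
      map_add' := by intro v w; ext i; fin_cases i <;> simp; ring
      map_smul' := by intro c w; ext i; fin_cases i <;> simp; ring }
    { toFun := fun v => ![v 0, v 1, v 2 - s * v 0]
      map_add' := by intro v w; ext i; fin_cases i <;> simp; ring
      map_smul' := by intro c w; ext i; fin_cases i <;> simp; ring }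
    (by apply LinearMap.ext; intro v; ext i; fin_cases i <;> simp)
    (by apply LinearMap.ext; intro v; ext i; fin_cases i <;> simp)

theorem el_apply (s : K) (v : Fin 3 → K) : el s v = ![v 0, v 1, v 2 + s * v 0] := rfl

theorem projMap_el (s x y z : K) (hn) (hn') :
    projMap (el s) (pt3 x y z hn) = pt3 x y (z + s * x) hn' := by
  unfold projMap pt3
  rw [Projectivization.map_mk]
  congr 1

theorem el_elation (s : K) : IsElationAxis (el s) (lineX0 K) := by
  refine ⟨pt3 0 0 1 (by simp), isLine_X0, ?_, ?_, ?_⟩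
  · rw [onLine_pt3, mem_lineX0]; rfl
  · intro P hP
    rcases pt_cases P with ⟨y, z, rfl⟩ | ⟨z, rfl⟩ | rfl
    · rw [onLine_pt3, mem_lineX0] at hP; simp at hP
    · rw [projMap_el (hn' := by simp)]; simp
    · rw [projMap_el (hn' := by simp)]; simp
  · intro M hM hR P hP
    rw [onLine_pt3] at hR
    have aux : ∀ x y z hn, OnLine (pt3 x y z hn) M → ∀ hn', OnLine (pt3 x y (z + s * x) hn') M := by
      intro x y z hn hx hn'
      rw [onLine_pt3] at hx ⊢
      have := M.add_mem hx (M.smul_mem (s * x) hR)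
      convert this using 1
      ext i; fin_cases i <;> simp
    rcases pt_cases P with ⟨y, z, rfl⟩ | ⟨z, rfl⟩ | rfl
    · rw [projMap_el (hn' := by simp)]; exact aux _ _ _ _ hP _
    · rw [projMap_el (hn' := by simp)]; exact aux _ _ _ _ hP _
    · rw [projMap_el (hn' := by simp)]; exact aux _ _ _ _ hP _

end

section
variable {K : Type*} [Field K] [Fintype K]

/-- The point `λ₁α₁+λ₂α₂+λ₃α₃`. -/
def yv [CharP K 2] (a : Fin 3 → K) (v : ZMod 2 × ZMod 2 × ZMod 2) : K :=
  phi v.1 * a 0 + phi v.2.1 * a 1 + phi v.2.2 * a 2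

/-- `z` lies in the coset attached to `λ`. -/
def Cond (T : K →+ ZMod 2) (a : Fin 3 → K) (v : ZMod 2 × ZMod 2 × ZMod 2) (z : K) : Prop :=
  T (a 0 * z) = v.1 + v.2.1 + v.2.2 + v.2.1 * v.2.2 ∧
  T (a 1 * z) = v.2.1 + v.2.2 + v.1 * v.2.2 ∧
  T (a 2 * z) = v.2.2 + v.1 * v.2.1

theorem Tr_eq_zero [CharP K 2] {h : ℕ} {T : K →+ ZMod 2} (hT : ∀ x, phi (T x) = Tr h x) (x : K) :
    Tr h x = 0 ↔ T x = 0 := by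
  rw [← hT, ← map_zero (phi (K := K)), phi_inj]

theorem T_ab [CharP K 2] {h : ℕ} {T : K →+ ZMod 2} (hT : ∀ x, phi (T x) = Tr h x)
    {a b : Fin 3 → K} (htr : ∀ i j, Tr h (a i * b j) = if i = j then 1 else 0) (i j : Fin 3) :
    T (a i * b j) = if i = j then 1 else 0 := by
  rw [← phi_inj (K := K), hT, htr]; split_ifs <;> simp

theorem T_comb [CharP K 2] {h : ℕ} {T : K →+ ZMod 2} (hT : ∀ x, phi (T x) = Tr h x)
    {a b : Fin 3 → K} (htr : ∀ i j, Tr h (a i * b j) = if i = j then 1 else 0)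
    (w : Fin 3 → ZMod 2) (i : Fin 3) :
    T (a i * (phi (w 0) * b 0 + phi (w 1) * b 1 + phi (w 2) * b 2)) = w i := by
  have : a i * (phi (w 0) * b 0 + phi (w 1) * b 1 + phi (w 2) * b 2) =
    phi (w 0) * (a i * b 0) + phi (w 1) * (a i * b 1) + phi (w 2) * (a i * b 2) := by ring
  rw [this, map_add, map_add, T_phi_mul, T_phi_mul, T_phi_mul]
  simp only [T_ab hT htr]
  fin_cases i <;> simp

theorem yv_inj [CharP K 2] {a : Fin 3 → K} (hind : F2Indep a) {v w : ZMod 2 × ZMod 2 × ZMod 2}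
    (hvw : yv a v = yv a w) : v = w := by
  have := hind ![phi (v.1 - w.1), phi (v.2.1 - w.2.1), phi (v.2.2 - w.2.2)]
    (by intro i; fin_cases i <;> exact phi_zero_or_one _)
    (by
      simp only [Fin.sum_univ_three]
      simp only [Matrix.cons_val_zero, Matrix.cons_val_one, Matrix.cons_val, map_sub]
      unfold yv at hvw; linear_combination hvw)
  have h0 := this 0
  have h1 := this 1
  have h2 := this 2
  simp only [Matrix.cons_val_zero, Matrix.cons_val_one, Matrix.cons_val] at h0 h1 h2
  rw [← map_zero (phi (K := K)), phi_inj, sub_eq_zero] at h0 h1 h2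
  exact Prod.ext h0 (Prod.ext h1 h2)

theorem mem1 [CharP K 2] {h : ℕ} {T : K →+ ZMod 2} (hT : ∀ x, phi (T x) = Tr h x)
    {a b : Fin 3 → K} (htr : ∀ i j, Tr h (a i * b j) = if i = j then 1 else 0) (y z : K) (hn) :
    pt3 1 y z hn ∈ q8Arc h a b ↔ ∃ v, y = yv a v ∧ Cond T a v z := by
  constructor
  · rintro (⟨x, _, hx⟩ | ⟨l, hl, s, hs, hP⟩)
    · exact absurd hx.symm pt3_0_ne_1
    · rw [pt3_1_eq] at hP
      obtain ⟨hy, hz⟩ := hP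
      choose t ht using fun i => exists_phi (hl i)
      refine ⟨(t 0, t 1, t 2), ?_, ?_⟩
      · rw [hy]; simp only [yv, ht]
      · have e : ∀ i, T (a i * z) = ![t 0 + t 1 + t 2 + t 1 * t 2, t 1 + t 2 + t 0 * t 2,
            t 2 + t 0 * t 1] i := by
          intro i
          rw [← T_comb hT htr ![t 0 + t 1 + t 2 + t 1 * t 2, t 1 + t 2 + t 0 * t 2,
            t 2 + t 0 * t 1] i, hz, mul_add, map_add, (Tr_eq_zero hT _).1 (hs i), add_zero]
          simp [ht]
        exact ⟨e 0, e 1, e 2⟩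
  · rintro ⟨v, rfl, h0, h1, h2⟩
    right
    refine ⟨![phi v.1, phi v.2.1, phi v.2.2],
      by intro i; fin_cases i <;> exact phi_zero_or_one _, ?_⟩
    have e : ∀ i, T (a i * z) = ![v.1 + v.2.1 + v.2.2 + v.2.1 * v.2.2, v.2.1 + v.2.2 + v.1 * v.2.2,
        v.2.2 + v.1 * v.2.1] i := by
      intro i; fin_cases i
      · exact h0
      · exact h1
      · exact h2
    refine ⟨z - (phi (v.1 + v.2.1 + v.2.2 + v.2.1 * v.2.2) * b 0 +
        phi (v.2.1 + v.2.2 + v.1 * v.2.2) * b 1 + phi (v.2.2 + v.1 * v.2.1) * b 2), ?_, ?_⟩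
    · intro i
      rw [Tr_eq_zero hT, mul_sub, map_sub, sub_eq_zero, e]
      exact (T_comb hT htr _ i).symm
    · rw [pt3_1_eq]
      refine ⟨by simp [yv], ?_⟩
      simp

theorem mem0 {h : ℕ} {a b : Fin 3 → K} (x : K) (hn) :
    pt3 0 1 x hn ∈ q8Arc h a b ↔ ∀ i, Tr h (a i ^ 2 * x) = 0 := by
  constructor
  · rintro (⟨x', h1, hx⟩ | ⟨l, hl, s, hs, hP⟩)
    · rw [pt3_01_eq] at hx; rw [hx]; exact h1
    · exact absurd hP pt3_0_ne_1
  · intro hx; left; exact ⟨x, hx, rfl⟩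

theorem memN {h : ℕ} {a b : Fin 3 → K} (hn) : pt3 0 0 1 hn ∉ q8Arc h a b := by
  rintro (⟨x', h1, hx⟩ | ⟨l, hl, s, hs, hP⟩)
  · exact pt3_00_ne_01 hx
  · exact pt3_0_ne_1 hP

theorem Cond_iff {T : K →+ ZMod 2} {a : Fin 3 → K} {v : ZMod 2 × ZMod 2 × ZMod 2} {z z' : K}
    (hz : Cond T a v z) : Cond T a v z' ↔ ∀ i, T (a i * (z' - z)) = 0 := by
  obtain ⟨h0, h1, h2⟩ := hz
  unfold Cond
  rw [← h0, ← h1, ← h2, Fin.forall_fin_succ, Fin.forall_fin_succ, Fin.forall_fin_one]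
  simp only [mul_sub, map_sub, sub_eq_zero]
  rfl

theorem exists_Cond [CharP K 2] {h : ℕ} {T : K →+ ZMod 2} (hT : ∀ x, phi (T x) = Tr h x)
    {a b : Fin 3 → K} (htr : ∀ i j, Tr h (a i * b j) = if i = j then 1 else 0)
    (v : ZMod 2 × ZMod 2 × ZMod 2) : ∃ z, Cond T a v z :=
  ⟨_, T_comb hT htr ![v.1 + v.2.1 + v.2.2 + v.2.1 * v.2.2, v.2.1 + v.2.2 + v.1 * v.2.2,
        v.2.2 + v.1 * v.2.1] 0, T_comb hT htr _ 1, T_comb hT htr _ 2⟩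

theorem fiber [CharP K 2] {h : ℕ} {T : K →+ ZMod 2} (hT : ∀ x, phi (T x) = Tr h x)
    {a b : Fin 3 → K} (hind : F2Indep a)
    (htr : ∀ i j, Tr h (a i * b j) = if i = j then 1 else 0) (α : K) :
    {z : K | pt3 1 α z (by simp) ∈ q8Arc h a b} = ∅ ∨
        ∃ β : K, {z : K | pt3 1 α z (by simp) ∈ q8Arc h a b}
          = (fun s => β + s) '' {x : K | ∀ i, Tr h (a i * x) = 0} := by
  by_cases hα : ∃ v, α = yv a v
  · right
    obtain ⟨v, rfl⟩ := hα
    obtain ⟨β, hβ⟩ := exists_Cond hT htr v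
    refine ⟨β, ?_⟩
    ext z
    simp only [Set.mem_image, Set.mem_ofPred_eq]
    rw [mem1 hT htr]
    constructor
    · rintro ⟨w, hw, hz⟩
      obtain rfl := yv_inj hind hw
      refine ⟨z - β, ?_, by ring⟩
      simp only [Tr_eq_zero hT]
      exact (Cond_iff hβ).1 hz
    · rintro ⟨s, hs, rfl⟩
      refine ⟨v, rfl, (Cond_iff hβ).2 ?_⟩
      simpa [Tr_eq_zero hT] using hs
  · left
    ext z
    simp only [Set.mem_ofPred_eq, Set.mem_empty_iff_false, iff_false]
    rw [mem1 hT htr]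
    rintro ⟨v, hv, _⟩; exact hα ⟨v, hv⟩

theorem card_S [CharP K 2] {h : ℕ} (hh : 4 ≤ h) (hcard : Fintype.card K = 2 ^ h)
    {T : K →+ ZMod 2} (hT : ∀ x, phi (T x) = Tr h x)
    {a b : Fin 3 → K} (htr : ∀ i j, Tr h (a i * b j) = if i = j then 1 else 0) :
    {x : K | ∀ i, Tr h (a i * x) = 0}.ncard = 2 ^ h / 8 := by
  let g : K →+ (Fin 3 → ZMod 2) :=
    AddMonoidHom.mk' (fun x i => T (a i * x)) (by intro x y; ext i; simp [mul_add])
  have hsurj : Function.Surjective g := fun w => ⟨_, funext fun i => T_comb hT htr w i⟩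
  have hset : {x : K | ∀ i, Tr h (a i * x) = 0} = (g.ker : Set K) := by
    ext x
    simp only [Set.mem_ofPred_eq, SetLike.mem_coe, AddMonoidHom.mem_ker, Tr_eq_zero hT]
    exact funext_iff.symm
  have h1 := AddSubgroup.card_mul_index g.ker
  rw [AddSubgroup.index_ker, AddMonoidHom.range_eq_top.2 hsurj, AddSubgroup.card_top,
    Nat.card_eq_fintype_card (α := K), hcard, Nat.card_eq_fintype_card (α := Fin 3 → ZMod 2)] at h1
  have h9 : Fintype.card (Fin 3 → ZMod 2) = 8 := by simp
  rw [h9] at h1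
  have h2 : {x : K | ∀ i, Tr h (a i * x) = 0}.ncard = Nat.card g.ker := by
    rw [hset]; rfl
  rw [h2, ← h1]; omega

theorem card_S0 [CharP K 2] {h : ℕ} (hh : 4 ≤ h) (hcard : Fintype.card K = 2 ^ h)
    {T : K →+ ZMod 2} (hT : ∀ x, phi (T x) = Tr h x)
    {a b : Fin 3 → K} (htr : ∀ i j, Tr h (a i * b j) = if i = j then 1 else 0) :
    {x : K | ∀ i, Tr h (a i ^ 2 * x) = 0}.ncard = 2 ^ h / 8 := by
  rw [← card_S hh hcard hT htr]
  have hinj : Function.Injective (fun x : K => x ^ 2) := (frobenius K 2).injective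
  have : {x : K | ∀ i, Tr h (a i ^ 2 * x) = 0} =
      (fun x : K => x ^ 2) '' {x : K | ∀ i, Tr h (a i * x) = 0} := by
    ext x
    simp only [Set.mem_image, Set.mem_ofPred_eq]
    constructor
    · intro hx
      obtain ⟨y, rfl⟩ := (Finite.injective_iff_surjective.1 hinj) x
      refine ⟨y, fun i => ?_, rfl⟩
      have := hx i
      simp only at this
      rwa [← mul_pow, Tr_sq hcard] at this
    · rintro ⟨y, hy, rfl⟩ i
      rw [← mul_pow, Tr_sq hcard]; exact hy i
  rw [this, Set.ncard_image_of_injective _ hinj]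

theorem count_X0 [CharP K 2] {h : ℕ} (hh : 4 ≤ h) (hcard : Fintype.card K = 2 ^ h)
    {T : K →+ ZMod 2} (hT : ∀ x, phi (T x) = Tr h x)
    {a b : Fin 3 → K} (htr : ∀ i j, Tr h (a i * b j) = if i = j then 1 else 0) :
    secantCount (q8Arc h a b) (lineX0 K) = 2 ^ h / 8 := by
  unfold secantCount
  rw [← card_S0 hh hcard hT htr]
  rw [← Set.ncard_image_of_injective (f := fun x : K => pt3 0 1 x (by simp)) _
    (fun x y hxy => pt3_01_eq.1 hxy)]
  congr 1
  ext P
  simp only [Set.mem_image, Set.mem_ofPred_eq]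
  constructor
  · rintro ⟨hP, hL⟩
    rcases pt_cases P with ⟨y, z, rfl⟩ | ⟨z, rfl⟩ | rfl
    · rw [onLine_pt3, mem_lineX0] at hL; simp at hL
    · exact ⟨z, (mem0 _ _).1 hP, rfl⟩
    · exact absurd hP (memN _)
  · rintro ⟨x, hx, rfl⟩
    exact ⟨(mem0 _ _).2 hx, by rw [onLine_pt3, mem_lineX0]; rfl⟩

theorem onLine_YaX {x y z α : K} (hn) : OnLine (pt3 x y z hn) (lineYaX α) ↔ y = α * x := by
  rw [onLine_pt3, mem_lineYaX]; rfl

theorem count_YaX [CharP K 2] {h : ℕ} (hh : 4 ≤ h) (hcard : Fintype.card K = 2 ^ h)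
    {T : K →+ ZMod 2} (hT : ∀ x, phi (T x) = Tr h x)
    {a b : Fin 3 → K} (hind : F2Indep a)
    (htr : ∀ i j, Tr h (a i * b j) = if i = j then 1 else 0) (α : K) :
    secantCount (q8Arc h a b) (lineYaX α) = 0 ∨
      secantCount (q8Arc h a b) (lineYaX α) = 2 ^ h / 8 := by
  have : secantCount (q8Arc h a b) (lineYaX α) =
      {z : K | pt3 1 α z (by simp) ∈ q8Arc h a b}.ncard := by
    unfold secantCount
    rw [← Set.ncard_image_of_injective (f := fun x : K => pt3 1 α x (by simp)) _
      (fun x y hxy => (pt3_1_eq.1 hxy).2)]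
    congr 1
    ext P
    simp only [Set.mem_image, Set.mem_ofPred_eq]
    constructor
    · rintro ⟨hP, hL⟩
      rcases pt_cases P with ⟨y, z, rfl⟩ | ⟨z, rfl⟩ | rfl
      · rw [onLine_YaX, mul_one] at hL
        subst hL; exact ⟨z, hP, rfl⟩
      · rw [onLine_YaX] at hL; simp at hL
      · exact absurd hP (memN _)
    · rintro ⟨x, hx, rfl⟩
      exact ⟨hx, by rw [onLine_YaX, mul_one]⟩
  rw [this]
  rcases fiber hT hind htr α with h0 | ⟨β, hβ⟩
  · left; rw [h0, Set.ncard_empty]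
  · right; rw [hβ, Set.ncard_image_of_injective _ (add_right_injective β)]
    exact card_S hh hcard hT htr

theorem count_gen [CharP K 2] {h : ℕ} (hcard : Fintype.card K = 2 ^ h)
    {T : K →+ ZMod 2} (hT : ∀ x, phi (T x) = Tr h x)
    {a b : Fin 3 → K} (hind : F2Indep a)
    (htr : ∀ i j, Tr h (a i * b j) = if i = j then 1 else 0)
    (L : Submodule K (Fin 3 → K)) (m k : K) (hL : ∀ v, v ∈ L ↔ v 2 = m * v 1 + k * v 0) :
    secantCount (q8Arc h a b) L = 0 ∨ secantCount (q8Arc h a b) L = 2 := by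
  have hon : ∀ x y z hn, OnLine (pt3 x y z hn) L ↔ z = m * y + k * x := by
    intro x y z hn; rw [onLine_pt3, hL]; rfl
  have hset : {P ∈ q8Arc h a b | OnLine P L} =
      {P | P = pt3 0 1 m (by simp) ∧ ∀ i, T (a i ^ 2 * m) = 0} ∪
      (fun v => pt3 1 (yv a v) (m * yv a v + k) (by simp)) ''
        {v | Cond T a v (m * yv a v + k)} := by
    ext P
    simp only [Set.mem_image, Set.mem_ofPred_eq, Set.mem_union]
    constructor
    · rintro ⟨hP, hPL⟩
      rcases pt_cases P with ⟨y, z, rfl⟩ | ⟨z, rfl⟩ | rfl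
      · right
        rw [hon, mul_one] at hPL; subst hPL
        obtain ⟨v, rfl, hc⟩ := (mem1 hT htr _ _ _).1 hP
        exact ⟨v, hc, rfl⟩
      · left
        rw [hon, mul_one, mul_zero, add_zero] at hPL; subst hPL
        rw [mem0] at hP
        exact ⟨rfl, fun i => (Tr_eq_zero hT _).1 (hP i)⟩
      · exact absurd hP (memN _)
    · rintro (⟨rfl, hm⟩ | ⟨v, hv, rfl⟩)
      · exact ⟨(mem0 _ _).2 fun i => (Tr_eq_zero hT _).2 (hm i), by rw [hon]; ring⟩
      · exact ⟨(mem1 hT htr _ _ _).2 ⟨v, rfl, hv⟩, by rw [hon]; ring⟩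
  have hdisj : Disjoint {P | P = pt3 0 1 m (by simp) ∧ ∀ i, T (a i ^ 2 * m) = 0}
      ((fun v => pt3 1 (yv a v) (m * yv a v + k) (by simp)) ''
        {v | Cond T a v (m * yv a v + k)}) := by
    rw [Set.disjoint_left]
    rintro P ⟨rfl, _⟩ ⟨v, _, hv⟩
    exact pt3_0_ne_1 hv.symm
  have hexp : ∀ v i, T (a i * (m * yv a v + k)) =
      T (a i * a 0 * m) * v.1 + T (a i * a 1 * m) * v.2.1 + T (a i * a 2 * m) * v.2.2
        + T (a i * k) := by
    intro v i
    have : a i * (m * yv a v + k) = phi v.1 * (a i * a 0 * m) + phi v.2.1 * (a i * a 1 * m)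
      + phi v.2.2 * (a i * a 2 * m) + a i * k := by unfold yv; ring
    rw [this, map_add, map_add, map_add, T_phi_mul, T_phi_mul, T_phi_mul]; ring
  unfold secantCount
  rw [hset, Set.ncard_union_eq hdisj (Set.toFinite _) (Set.toFinite _),
    Set.ncard_image_of_injective _ (fun v w hvw => yv_inj hind (pt3_1_eq.1 hvw).1)]
  have h1 : {P : Pt K | P = pt3 0 1 m (by simp) ∧ ∀ i, T (a i ^ 2 * m) = 0}.ncard =
      if T (a 0 * a 0 * m) = 0 ∧ T (a 1 * a 1 * m) = 0 ∧ T (a 2 * a 2 * m) = 0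
      then 1 else 0 := by
    have hiff : (∀ i, T (a i ^ 2 * m) = 0) ↔
        T (a 0 * a 0 * m) = 0 ∧ T (a 1 * a 1 * m) = 0 ∧ T (a 2 * a 2 * m) = 0 := by
      rw [Fin.forall_fin_succ, Fin.forall_fin_succ, Fin.forall_fin_one]
      simp only [pow_two]; rfl
    rw [hiff]
    split_ifs with hc
    · simp only [hc, and_true]; exact Set.ncard_singleton _
    · simp only [hc, and_false]; exact Set.ncard_empty _
  have h2 := finite_check (T (a 0 * a 0 * m)) (T (a 0 * a 1 * m)) (T (a 0 * a 2 * m))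
    (T (a 1 * a 1 * m)) (T (a 1 * a 2 * m)) (T (a 2 * a 2 * m))
    (T (a 0 * k)) (T (a 1 * k)) (T (a 2 * k))
  have h3 : {v | Cond T a v (m * yv a v + k)} = ((Finset.univ.filter
      (fun v : ZMod 2 × ZMod 2 × ZMod 2 =>
        T (a 0 * a 0 * m) * v.1 + T (a 0 * a 1 * m) * v.2.1 + T (a 0 * a 2 * m) * v.2.2
          + T (a 0 * k) = v.1 + v.2.1 + v.2.2 + v.2.1 * v.2.2 ∧
        T (a 0 * a 1 * m) * v.1 + T (a 1 * a 1 * m) * v.2.1 + T (a 1 * a 2 * m) * v.2.2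
          + T (a 1 * k) = v.2.1 + v.2.2 + v.1 * v.2.2 ∧
        T (a 0 * a 2 * m) * v.1 + T (a 1 * a 2 * m) * v.2.1 + T (a 2 * a 2 * m) * v.2.2
          + T (a 2 * k) = v.2.2 + v.1 * v.2.1) : Finset _) : Set _) := by
    ext v
    simp only [Set.mem_ofPred_eq, Finset.coe_filter, Finset.mem_univ, true_and, Cond, hexp]
    rw [mul_comm (a 1) (a 0), mul_comm (a 2) (a 0), mul_comm (a 2) (a 1)]
  rw [h1, h3, Set.ncard_coe_finset]
  exact h2

theorem card_arc [CharP K 2] {h : ℕ} (hh : 4 ≤ h) (hcard : Fintype.card K = 2 ^ h)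
    {T : K →+ ZMod 2} (hT : ∀ x, phi (T x) = Tr h x)
    {a b : Fin 3 → K} (hind : F2Indep a)
    (htr : ∀ i j, Tr h (a i * b j) = if i = j then 1 else 0) :
    (q8Arc h a b).ncard = 2 ^ h + 2 ^ h / 8 := by
  choose β hβ using exists_Cond hT htr
  have hset : q8Arc h a b = {P ∈ q8Arc h a b | OnLine P (lineX0 K)} ∪
      (fun p : (ZMod 2 × ZMod 2 × ZMod 2) × K => pt3 1 (yv a p.1) (β p.1 + p.2) (by simp)) ''
        (Set.univ ×ˢ {x : K | ∀ i, Tr h (a i * x) = 0}) := by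
    ext P
    simp only [Set.mem_image, Set.mem_ofPred_eq, Set.mem_union, Set.mem_prod, Set.mem_univ,
      true_and]
    constructor
    · intro hP
      rcases pt_cases P with ⟨y, z, rfl⟩ | ⟨z, rfl⟩ | rfl
      · right
        obtain ⟨v, rfl, hc⟩ := (mem1 hT htr _ _ _).1 hP
        refine ⟨(v, z - β v), fun i => (Tr_eq_zero hT _).2 ((Cond_iff (hβ v)).1 hc i), ?_⟩
        rw [pt3_1_eq]; exact ⟨rfl, by ring⟩
      · left; exact ⟨hP, by rw [onLine_pt3, mem_lineX0]; rfl⟩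
      · exact absurd hP (memN _)
    · rintro (⟨hP, _⟩ | ⟨⟨v, s⟩, hs, rfl⟩)
      · exact hP
      · refine (mem1 hT htr _ _ _).2 ⟨v, rfl, (Cond_iff (hβ v)).2 fun i => ?_⟩
        rw [add_sub_cancel_left]; exact (Tr_eq_zero hT _).1 (hs i)
  have hinj : Function.Injective (fun p : (ZMod 2 × ZMod 2 × ZMod 2) × K =>
      pt3 1 (yv a p.1) (β p.1 + p.2) (by simp)) := by
    rintro ⟨v, s⟩ ⟨w, s'⟩ hvw
    obtain ⟨h1, h2⟩ := pt3_1_eq.1 hvw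
    obtain rfl := yv_inj hind h1
    simpa using h2
  rw [hset, Set.ncard_union_eq _ (Set.toFinite _) (Set.toFinite _),
    Set.ncard_image_of_injective _ hinj, Set.ncard_prod, card_S hh hcard hT htr, Set.ncard_univ]
  · have h1 := count_X0 hh hcard hT htr
    unfold secantCount at h1
    rw [h1, Nat.card_eq_fintype_card]
    have h8 : 8 ∣ 2 ^ h := pow_dvd_pow 2 (show 3 ≤ h by omega)
    have h9 : Fintype.card (ZMod 2 × ZMod 2 × ZMod 2) = 8 := by simp [Fintype.card_prod]
    rw [h9]; omega
  · rw [Set.disjoint_left]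
    rintro P ⟨_, hP⟩ ⟨p, _, rfl⟩
    rw [onLine_pt3, mem_lineX0] at hP; simp at hP

theorem stab [CharP K 2] {h : ℕ} {T : K →+ ZMod 2} (hT : ∀ x, phi (T x) = Tr h x)
    {a b : Fin 3 → K} (htr : ∀ i j, Tr h (a i * b j) = if i = j then 1 else 0)
    {s : K} (hs : ∀ i, T (a i * s) = 0) : Stabilises (el s) (q8Arc h a b) := by
  have hinj : Function.Injective (projMap (el s)) := Projectivization.map_injective _ _
  apply Set.eq_of_subset_of_ncard_le
  · rintro _ ⟨P, hP, rfl⟩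
    rcases pt_cases P with ⟨y, z, rfl⟩ | ⟨z, rfl⟩ | rfl
    · rw [projMap_el (hn' := by simp)]
      obtain ⟨v, rfl, hc⟩ := (mem1 hT htr _ _ _).1 hP
      refine (mem1 hT htr _ _ _).2 ⟨v, rfl, (Cond_iff hc).2 fun i => ?_⟩
      rw [mul_one, add_sub_cancel_left]; exact hs i
    · rw [projMap_el (hn' := by simp)]; simpa using hP
    · exact absurd hP (memN _)
  · rw [Set.ncard_image_of_injective _ hinj]
  · exact Set.toFinite _

end

end Q8

/-- Theorem 4.4: the `q/8`-construction yields, for `q > 16`, an elation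
KM-arc of type `q/8` with `q/8`-nucleus `(0:0:1)` and elation line `X = 0` (every set
`{z | (1:α:z) ∈ A}` is empty or a coset of `S`), and for `q = 16` a hyperoval stabilised
by a non-trivial elation with axis `X = 0`. -/
theorem q8_construction
    {K : Type*} [Field K] [Fintype K] (h : ℕ) (hh : 4 ≤ h)
    (hcard : Fintype.card K = 2 ^ h)
    (a b : Fin 3 → K) (hind : F2Indep a) (ha : ∀ i, a i ≠ 0) (hb : ∀ i, b i ≠ 0)
    (htr : ∀ i j, Tr h (a i * b j) = if i = j then 1 else 0) :
    (16 < 2 ^ h →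
      IsElationKMArc (2 ^ h) (2 ^ h / 8) (q8Arc h a b) (pt3 (0 : K) 0 1 (by simp))
        (lineX0 K) ∧
      ∀ α : K, {z : K | pt3 1 α z (by simp) ∈ q8Arc h a b} = ∅ ∨
        ∃ β : K, {z : K | pt3 1 α z (by simp) ∈ q8Arc h a b}
          = (fun s => β + s) '' {x : K | ∀ i, Tr h (a i * x) = 0}) ∧
    (2 ^ h = 16 →
      (q8Arc h a b).ncard = 18 ∧
      (∀ L : Submodule K (Fin 3 → K), IsLine L →
        secantCount (q8Arc h a b) L = 0 ∨ secantCount (q8Arc h a b) L = 2) ∧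
      ∃ f : (Fin 3 → K) ≃ₗ[K] (Fin 3 → K),
        IsElationAxis f (lineX0 K) ∧ Stabilises f (q8Arc h a b) ∧ projMap f ≠ id) := by
  haveI : CharP K 2 := Q8.charTwo hcard
  obtain ⟨T, hT⟩ := Q8.exists_T hcard
  have hcases := fun (L : Submodule K (Fin 3 → K)) (hL : IsLine L) => Q8.line_cases L hL
  refine ⟨fun hq => ⟨⟨⟨Q8.card_arc hh hcard hT hind htr, ?_⟩, Q8.isLine_X0, ?_, ?_, ?_⟩,
    Q8.fiber hT hind htr⟩, fun hq => ⟨?_, ?_, ?_⟩⟩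
  · intro L hL
    rcases hcases L hL with rfl | ⟨α, rfl⟩ | ⟨m, k, hmk⟩
    · exact Or.inr (Or.inr (Q8.count_X0 hh hcard hT htr))
    · rcases Q8.count_YaX hh hcard hT hind htr α with h0 | h0
      · exact Or.inl h0
      · exact Or.inr (Or.inr h0)
    · rcases Q8.count_gen hcard hT hind htr L m k hmk with h0 | h0
      · exact Or.inl h0
      · exact Or.inr (Or.inl h0)
  · rw [Q8.onLine_pt3, Q8.mem_lineX0]; rfl
  · have h5 : 2 < 2 ^ h / 8 := by
      have h5 : 5 ≤ h := by
        by_contra hlt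
        have : h = 4 := by omega
        subst this; norm_num at hq
      have := Nat.pow_le_pow_right (show 0 < 2 by norm_num) h5
      omega
    intro L hL hc
    rcases hcases L hL with rfl | ⟨α, rfl⟩ | ⟨m, k, hmk⟩
    · rw [Q8.onLine_pt3, Q8.mem_lineX0]; rfl
    · rw [Q8.onLine_YaX]; simp
    · rcases Q8.count_gen hcard hT hind htr L m k hmk with h0 | h0 <;> omega
  · have h5 : 2 < 2 ^ h / 8 := by
      have h5 : 5 ≤ h := by
        by_contra hlt
        have : h = 4 := by omega
        subst this; norm_num at hq
      have := Nat.pow_le_pow_right (show 0 < 2 by norm_num) h5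
      omega
    intro L hL hc hne P hP hPL Q hQ hQL
    rcases hcases L hL with rfl | ⟨α, rfl⟩ | ⟨m, k, hmk⟩
    · exact absurd rfl hne
    · have hform : ∀ R ∈ q8Arc h a b, OnLine R (lineYaX α) → ∃ z, R = pt3 1 α z (by simp) := by
        intro R hR hRL
        rcases Q8.pt_cases R with ⟨y, z, rfl⟩ | ⟨z, rfl⟩ | rfl
        · rw [Q8.onLine_YaX, mul_one] at hRL
          subst hRL; exact ⟨z, rfl⟩
        · rw [Q8.onLine_YaX] at hRL; simp at hRL
        · exact absurd hR (Q8.memN _)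
      obtain ⟨z, rfl⟩ := hform P hP hPL
      obtain ⟨w, rfl⟩ := hform Q hQ hQL
      obtain ⟨v, hv, hcz⟩ := (Q8.mem1 hT htr _ _ _).1 hP
      obtain ⟨v', hv', hcw⟩ := (Q8.mem1 hT htr _ _ _).1 hQ
      obtain rfl := Q8.yv_inj hind (hv.symm.trans hv')
      refine ⟨Q8.el (w - z), Q8.el_elation _, Q8.stab hT htr ((Q8.Cond_iff hcz).1 hcw), ?_⟩
      rw [Q8.projMap_el (hn' := by simp), Q8.pt3_1_eq]
      exact ⟨rfl, by ring⟩
    · rcases Q8.count_gen hcard hT hind htr L m k hmk with h0 | h0 <;> omega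
  · rw [Q8.card_arc hh hcard hT hind htr, hq]
  · have h2 : 2 ^ h / 8 = 2 := by rw [hq]
    intro L hL
    rcases hcases L hL with rfl | ⟨α, rfl⟩ | ⟨m, k, hmk⟩
    · exact Or.inr ((Q8.count_X0 hh hcard hT htr).trans h2)
    · rcases Q8.count_YaX hh hcard hT hind htr α with h0 | h0
      · exact Or.inl h0
      · exact Or.inr (h0.trans h2)
    · exact Q8.count_gen hcard hT hind htr L m k hmk
  · have h2 : {x : K | ∀ i, Tr h (a i * x) = 0}.ncard = 2 := by
      rw [Q8.card_S hh hcard hT htr, hq]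
    obtain ⟨s, hs, hs0⟩ := Set.exists_ne_of_one_lt_ncard (by rw [h2]; norm_num) (0 : K)
    refine ⟨Q8.el s, Q8.el_elation s,
      Q8.stab hT htr (fun i => (Q8.Tr_eq_zero hT _).1 (hs i)), ?_⟩
    intro hid
    have h3 := congrFun hid (pt3 1 0 0 (by simp))
    rw [Q8.projMap_el (hn' := by simp), id, Q8.pt3_1_eq] at h3
    exact hs0 (by simpa using h3.2)
end
end

section
/- For every q = 2^h with h ≥ 4 there exists a KM-arc of type q/8 in PG(2,q), i.e. a set of q + q/8 points of PG(2,q) such that every line of PG(2,q) contains exactly 0, 2 or q/8 of them. -/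
open scoped Classical

noncomputable section

variable {K : Type*} [Field K]

/-- The quadratic permutation of `F₂³` used in the construction. -/
def q8f (l : ZMod 2 × ZMod 2 × ZMod 2) : Fin 3 → ZMod 2 :=
  ![l.1 + l.2.1 + l.2.2 + l.2.1 * l.2.2, l.2.1 + l.2.2 + l.1 * l.2.2, l.2.2 + l.1 * l.2.1]

lemma q8_dec1 : ∀ d e f k0 k1 k2 : ZMod 2,
    (Finset.univ.filter (fun l : ZMod 2 × ZMod 2 × ZMod 2 =>
      l.1 + l.2.1 + l.2.2 + l.2.1 * l.2.2 = k0 + (l.2.1 * d + l.2.2 * e) ∧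
      l.2.1 + l.2.2 + l.1 * l.2.2 = k1 + (l.1 * d + l.2.2 * f) ∧
      l.2.2 + l.1 * l.2.1 = k2 + (l.1 * e + l.2.1 * f))).card = 1 := by
  decide +kernel

lemma q8_dec2 : ∀ a b c d e f k0 k1 k2 : ZMod 2, ¬ (a = 0 ∧ b = 0 ∧ c = 0) →
    (Finset.univ.filter (fun l : ZMod 2 × ZMod 2 × ZMod 2 =>
      l.1 + l.2.1 + l.2.2 + l.2.1 * l.2.2 = k0 + (l.1 * a + l.2.1 * d + l.2.2 * e) ∧
      l.2.1 + l.2.2 + l.1 * l.2.2 = k1 + (l.1 * d + l.2.1 * b + l.2.2 * f) ∧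
      l.2.2 + l.1 * l.2.1 = k2 + (l.1 * e + l.2.1 * f + l.2.2 * c))).card = 0 ∨
    (Finset.univ.filter (fun l : ZMod 2 × ZMod 2 × ZMod 2 =>
      l.1 + l.2.1 + l.2.2 + l.2.1 * l.2.2 = k0 + (l.1 * a + l.2.1 * d + l.2.2 * e) ∧
      l.2.1 + l.2.2 + l.1 * l.2.2 = k1 + (l.1 * d + l.2.1 * b + l.2.2 * f) ∧
      l.2.2 + l.1 * l.2.1 = k2 + (l.1 * e + l.2.1 * f + l.2.2 * c))).card = 2 := by
  decide +kernel

lemma q8f_bij : ∀ k0 k1 k2 : ZMod 2, ∃ l : ZMod 2 × ZMod 2 × ZMod 2, q8f l = ![k0, k1, k2] := by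
  decide +kernel

lemma q8f_inj : ∀ l l' : ZMod 2 × ZMod 2 × ZMod 2, q8f l = q8f l' → l = l' := by
  decide +kernel

lemma q8_surj {K : Type*} [Field K] [Fintype K] [Algebra (ZMod 2) K] (a : Fin 3 → K)
    (ha : LinearIndependent (ZMod 2) a) :
    Function.Surjective (LinearMap.pi (fun i : Fin 3 =>
      (Algebra.trace (ZMod 2) K).comp (LinearMap.mulLeft (ZMod 2) (a i)))) := by
  rw [← LinearMap.range_eq_top]
  by_contra hne
  obtain ⟨g, hg, hle⟩ := Submodule.exists_le_ker_of_lt_top _ (lt_top_iff_ne_top.mpr hne)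
  apply hg
  have key : ∑ i, g (Pi.single i 1) • a i = 0 := by
    apply (traceForm_nondegenerate (ZMod 2) K).1
    intro x
    have := hle ⟨x, rfl⟩
    rw [LinearMap.mem_ker, LinearMap.pi_apply_eq_sum_univ] at this
    rw [Algebra.traceForm_apply, Finset.sum_mul, map_sum, ← this]
    apply Finset.sum_congr rfl
    intro i _
    have hs : (fun j => if i = j then (1 : ZMod 2) else 0) = Pi.single i 1 := by
      ext j
      simp [Pi.single_apply, eq_comm]
    rw [hs, smul_mul_assoc, map_smul, smul_eq_mul, smul_eq_mul, mul_comm]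
    rfl
  have h0 := Fintype.linearIndependent_iff.mp ha _ key
  apply LinearMap.pi_ext'
  intro i
  ext
  simp [h0 i]

lemma q8_fiber {K : Type*} [Field K] [Fintype K] [Algebra (ZMod 2) K] (h : ℕ)
    (hcard : Fintype.card K = 2 ^ h) (a : Fin 3 → K)
    (ha : LinearIndependent (ZMod 2) a) (κ : Fin 3 → ZMod 2) :
    {z : K | ∀ i, Algebra.trace (ZMod 2) K (a i * z) = κ i}.ncard = 2 ^ h / 8 := by
  have hs := q8_surj a ha
  set φ := (LinearMap.pi (fun i : Fin 3 =>
      (Algebra.trace (ZMod 2) K).comp (LinearMap.mulLeft (ZMod 2) (a i)))) with hφ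
  have e : ∀ κ : Fin 3 → ZMod 2, {z : K | ∀ i, Algebra.trace (ZMod 2) K (a i * z) = κ i}.ncard
      = (Finset.univ.filter (fun z => φ z = κ)).card := by
    intro κ
    rw [← Set.ncard_coe_finset]
    congr 1
    ext z
    simp [hφ, funext_iff]
  have hc : ∀ κ' , (Finset.univ.filter (fun z => φ z = κ')).card =
      (Finset.univ.filter (fun z => φ z = κ)).card := by
    intro κ'
    obtain ⟨x, hx⟩ := hs κ'
    obtain ⟨y, hy⟩ := hs κ
    apply Finset.card_bij (fun z _ => z - x + y)
    · intro z hz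
      simp at hz ⊢
      rw [hz, hx, hy]; simp
    · intro z _ w _ hzw
      simpa using hzw
    · intro z hz
      refine ⟨z - y + x, ?_, by ring⟩
      simp at hz ⊢
      rw [hz, hx, hy]; simp
  have := Finset.card_eq_sum_card_fiberwise (f := φ) (s := Finset.univ) (t := Finset.univ)
    (by simp)
  rw [Finset.sum_congr rfl (fun κ' _ => hc κ')] at this
  simp [hcard] at this
  rw [e, this]
  simp

lemma q8_sq {K : Type*} [Field K] [Fintype K] [Algebra (ZMod 2) K] (a : Fin 3 → K)
    (ha : LinearIndependent (ZMod 2) a) :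
    LinearIndependent (ZMod 2) (fun i => a i ^ 2) := by
  haveI : CharP K 2 := charP_of_injective_algebraMap (algebraMap (ZMod 2) K).injective 2
  rw [Fintype.linearIndependent_iff] at ha ⊢
  intro g hg
  apply ha
  have : (∑ i, g i • a i) ^ 2 = 0 := by
    rw [← hg, sum_pow_char]
    apply Finset.sum_congr rfl
    intro i _
    rw [smul_pow, ZMod.pow_card]
  simpa using this

lemma q8_line {K : Type*} [Field K] (L : Submodule K (Fin 3 → K)) (hL : IsLine L) :
    ∃ u0 u1 u2 : K, ¬ (u0 = 0 ∧ u1 = 0 ∧ u2 = 0) ∧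
      ∀ v : Fin 3 → K, v ∈ L ↔ u0 * v 0 + u1 * v 1 + u2 * v 2 = 0 := by
  unfold IsLine at hL
  have hlt : L < ⊤ := by
    rw [lt_top_iff_ne_top]
    rintro rfl
    simp at hL
  obtain ⟨g, hg, hle⟩ := Submodule.exists_le_ker_of_lt_top _ hlt
  have hgv : ∀ v, g v = g (Pi.single 0 1) * v 0 + g (Pi.single 1 1) * v 1
      + g (Pi.single 2 1) * v 2 := by
    intro v
    conv_lhs => rw [show v = v 0 • Pi.single 0 1 + v 1 • Pi.single 1 1 + v 2 • Pi.single 2 1 by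
      ext i; fin_cases i <;> simp]
    simp only [map_add, map_smul, smul_eq_mul]
    ring
  refine ⟨g (Pi.single 0 1), g (Pi.single 1 1), g (Pi.single 2 1), ?_, ?_⟩
  · rintro ⟨h0, h1, h2⟩
    apply hg
    ext v
    simp only [LinearMap.comp_apply]
    rw [hgv]; simp [h0, h1, h2]
  · have : L = LinearMap.ker g := by
      apply Submodule.eq_of_le_of_finrank_eq hle
      have h1 := LinearMap.finrank_range_add_finrank_ker g
      rw [LinearMap.range_eq_top.mpr (LinearMap.surjective hg)] at h1
      simp at h1
      omega
    intro v
    rw [this, LinearMap.mem_ker, hgv]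

lemma onLine_pt3 {K : Type*} [Field K] (a b c : K) (H) (L : Submodule K (Fin 3 → K)) :
    OnLine (pt3 a b c H) L ↔ ![a, b, c] ∈ L := by
  unfold OnLine pt3
  rw [Projectivization.submodule_mk, Submodule.span_singleton_le_iff_mem]

lemma q8_p0_inj {K : Type*} [Field K] :
    Function.Injective (fun x : K => pt3 0 1 x (by simp)) := by
  intro x y hxy
  simp only [pt3] at hxy
  rw [Projectivization.mk_eq_mk_iff'] at hxy
  obtain ⟨c, hc⟩ := hxy
  have h1 := congrFun hc 1
  have h2 := congrFun hc 2
  simp at h1 h2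
  simp [← h2, h1]

lemma q8_p1_inj {K : Type*} [Field K] {y z y' z' : K}
    (hxy : pt3 1 y z (by simp) = pt3 1 y' z' (by simp)) : y = y' ∧ z = z' := by
  simp only [pt3] at hxy
  rw [Projectivization.mk_eq_mk_iff'] at hxy
  obtain ⟨c, hc⟩ := hxy
  have h0 := congrFun hc 0
  have h1 := congrFun hc 1
  have h2 := congrFun hc 2
  simp at h0 h1 h2
  subst h0
  simp at h1 h2
  exact ⟨h1.symm, h2.symm⟩

lemma q8_p01 {K : Type*} [Field K] {x y z : K} :
    pt3 0 1 x (by simp) ≠ pt3 1 y z (by simp) := by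
  intro hxy
  simp only [pt3] at hxy
  rw [Projectivization.mk_eq_mk_iff'] at hxy
  obtain ⟨c, hc⟩ := hxy
  have h0 := congrFun hc 0
  have h1 := congrFun hc 1
  simp at h0 h1
  simp [h0] at h1

/-- Corollary 4.5: for every `q = 2^h` with `h ≥ 4` there exists a KM-arc
of type `q/8` in `PG(2,q)`. -/
theorem q8_exists
    {K : Type*} [Field K] [Fintype K] (h : ℕ) (hh : 4 ≤ h)
    (hcard : Fintype.card K = 2 ^ h) :
    ∃ A : Set (Pt K), IsKMArc (2 ^ h) (2 ^ h / 8) A := by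
  haveI hch : CharP K 2 := by
    obtain ⟨p, hp⟩ := CharP.exists K
    obtain ⟨n, hpp, hn⟩ := FiniteField.card K p
    have : p ∣ 2 ^ h := by
      rw [← hcard, hn]; exact dvd_pow_self _ n.pos.ne'
    have := (Nat.prime_dvd_prime_iff_eq hpp Nat.prime_two).mp (hpp.dvd_of_dvd_pow this)
    subst this
    exact hp
  letI : Algebra (ZMod 2) K := ZMod.algebra K 2
  have hfr : Module.finrank (ZMod 2) K = h := by
    have := Module.card_eq_pow_finrank (K := ZMod 2) (V := K)
    rw [hcard, ZMod.card] at this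
    exact (Nat.pow_right_injective le_rfl this).symm
  obtain ⟨a, ha⟩ : ∃ a : Fin 3 → K, LinearIndependent (ZMod 2) a := by
    let B := Module.finBasisOfFinrankEq (ZMod 2) K hfr
    exact ⟨B ∘ Fin.castLE (by omega), B.linearIndependent.comp _ (Fin.castLE_injective _)⟩
  let T := ZMod 2 × ZMod 2 × ZMod 2
  let tr := Algebra.trace (ZMod 2) K
  let y : T → K := fun l => l.1 • a 0 + l.2.1 • a 1 + l.2.2 • a 2
  have hyinj : Function.Injective y := by
    intro l l' hl
    have := Fintype.linearIndependent_iff.mp ha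
      ![l.1 - l'.1, l.2.1 - l'.2.1, l.2.2 - l'.2.2] (by
        simp only [y] at hl
        simp only [Fin.sum_univ_three, Matrix.cons_val, sub_smul]
        linear_combination hl)
    have h0 := this 0
    have h1 := this 1
    have h2 := this 2
    simp [sub_eq_zero] at h0 h1 h2
    exact Prod.ext h0 (Prod.ext h1 h2)
  let S0 : Set K := {x | ∀ i, tr (a i ^ 2 * x) = 0}
  let S1 : Set (T × K) := {w | ∀ i, tr (a i * w.2) = q8f w.1 i}
  let p0 : K → Pt K := fun x => pt3 0 1 x (by simp)
  let p1 : T × K → Pt K := fun w => pt3 1 (y w.1) w.2 (by simp)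
  have hp0 : Function.Injective p0 := q8_p0_inj
  have hp1 : Function.Injective p1 := by
    intro w w' hw
    have := q8_p1_inj hw
    exact Prod.ext (hyinj this.1) this.2
  have hp01 : ∀ x w, p0 x ≠ p1 w := fun x w => q8_p01
  have hS0 : S0.ncard = 2 ^ h / 8 := by
    exact q8_fiber h hcard _ (q8_sq a ha) 0
  have hcount : ∀ (U : Set K) (V : Set (T × K)), (p0 '' U ∪ p1 '' V).ncard = U.ncard + V.ncard := by
    intro U V
    rw [Set.ncard_union_eq _ (Set.toFinite _) (Set.toFinite _), Set.ncard_image_of_injective _ hp0,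
      Set.ncard_image_of_injective _ hp1]
    rw [Set.disjoint_left]
    rintro _ ⟨x, _, rfl⟩ ⟨w, _, hw⟩
    exact hp01 x w hw.symm
  have hS1 : S1.ncard = 2 ^ h := by
    have : Prod.snd '' S1 = Set.univ := by
      rw [Set.eq_univ_iff_forall]
      intro z
      obtain ⟨l, hl⟩ := q8f_bij (tr (a 0 * z)) (tr (a 1 * z)) (tr (a 2 * z))
      refine ⟨(l, z), ?_, rfl⟩
      intro i
      rw [hl]
      fin_cases i <;> rfl
    rw [← hcard, ← Nat.card_eq_fintype_card, ← Set.ncard_univ, ← this, Set.ncard_image_of_injOn]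
    rintro ⟨l, z⟩ hw ⟨l', z'⟩ hw' (rfl : z = z')
    have : l = l' := q8f_inj _ _ (by ext1 i; exact (hw i).symm.trans (hw' i))
    rw [this]
  refine ⟨p0 '' S0 ∪ p1 '' S1, ?_, ?_⟩
  · rw [hcount, hS0, hS1, add_comm]
  intro L hL
  obtain ⟨u0, u1, u2, hu, hmem⟩ := q8_line L hL
  have hsec : secantCount (p0 '' S0 ∪ p1 '' S1) L =
      {x ∈ S0 | u1 + u2 * x = 0}.ncard + {w ∈ S1 | u0 + u1 * y w.1 + u2 * w.2 = 0}.ncard := by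
    rw [← hcount, secantCount]
    congr 1
    ext P
    constructor
    · rintro ⟨⟨x, hx, rfl⟩ | ⟨w, hw, rfl⟩, hP⟩
      · left
        refine ⟨x, ⟨hx, ?_⟩, rfl⟩
        simpa [p0, onLine_pt3, hmem] using hP
      · right
        refine ⟨w, ⟨hw, ?_⟩, rfl⟩
        simpa [p1, onLine_pt3, hmem] using hP
    · rintro (⟨x, ⟨hx, hP⟩, rfl⟩ | ⟨w, ⟨hw, hP⟩, rfl⟩)
      · refine ⟨Or.inl ⟨x, hx, rfl⟩, ?_⟩
        simpa [p0, onLine_pt3, hmem] using hP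
      · refine ⟨Or.inr ⟨w, hw, rfl⟩, ?_⟩
        simpa [p1, onLine_pt3, hmem] using hP
  rw [hsec]
  by_cases h2 : u2 = 0
  · subst h2
    by_cases h1 : u1 = 0
    · subst h1
      have h0 : u0 ≠ 0 := fun h0 => hu ⟨h0, rfl, rfl⟩
      right; right
      simp [h0, hS0]
    · by_cases hex : ∃ l, u0 + u1 * y l = 0
      · obtain ⟨l, hl⟩ := hex
        right; right
        have : {w ∈ S1 | u0 + u1 * y w.1 + 0 * w.2 = 0} =
            (fun z => (l, z)) '' {z : K | ∀ i, tr (a i * z) = q8f l i} := by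
          ext ⟨l', z⟩
          constructor
          · rintro ⟨hw, hw2⟩
            have : l' = l := by
              apply hyinj
              apply mul_left_cancel₀ h1
              simp only at hw2
              linear_combination hw2 - hl
            subst this
            exact ⟨z, hw, rfl⟩
          · rintro ⟨z, hz, hzz⟩
            obtain ⟨rfl, rfl⟩ := Prod.mk.inj hzz
            exact ⟨hz, by simpa using hl⟩
        rw [this, Set.ncard_image_of_injective _ (Prod.mk_right_injective l),
          q8_fiber h hcard a ha]
        simp [h1]
      · left
        push Not at hex
        simp [h1, hex]
  · let m := - u1 / u2
    let k := - u0 / u2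
    have e1 : {x ∈ S0 | u1 + u2 * x = 0} = {x ∈ S0 | x = m} := by
      ext x
      simp only [Set.mem_setOf_eq, m, eq_div_iff h2]
      refine and_congr_right fun _ => ⟨fun hx => by linear_combination hx,
        fun hx => by linear_combination hx⟩
    let F : Finset T := Finset.univ.filter (fun l => ∀ i, q8f l i = tr (a i * (k + m * y l)))
    have e2 : {w ∈ S1 | u0 + u1 * y w.1 + u2 * w.2 = 0} = (fun l => (l, k + m * y l)) '' (F : Set T) := by
      ext ⟨l, z⟩
      have : u0 + u1 * y l + u2 * z = 0 ↔ k + m * y l = z := by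
        simp only [k, m]
        rw [← mul_right_inj' h2]
        field_simp
        exact ⟨fun hx => by linear_combination -hx, fun hx => by linear_combination -hx⟩
      constructor
      · rintro ⟨hw, hw2⟩
        have hz := this.mp hw2
        subst hz
        refine ⟨l, ?_, rfl⟩
        simp only [F, Finset.coe_filter, Finset.mem_univ, true_and, Set.mem_setOf_eq]
        exact fun i => (hw i).symm
      · rintro ⟨l', hl', hzz⟩
        obtain ⟨rfl, hz⟩ := Prod.mk.inj hzz
        refine ⟨?_, this.mpr hz⟩
        subst hz
        simp only [F, Finset.coe_filter, Finset.mem_univ, true_and, Set.mem_setOf_eq] at hl'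
        exact fun i => (hl' i).symm
    have e3 : F = Finset.univ.filter (fun l : ZMod 2 × ZMod 2 × ZMod 2 =>
      l.1 + l.2.1 + l.2.2 + l.2.1 * l.2.2 = tr (a 0 * k) + (l.1 * tr (a 0 ^ 2 * m) + l.2.1 * tr (a 0 * a 1 * m) + l.2.2 * tr (a 0 * a 2 * m)) ∧
      l.2.1 + l.2.2 + l.1 * l.2.2 = tr (a 1 * k) + (l.1 * tr (a 0 * a 1 * m) + l.2.1 * tr (a 1 ^ 2 * m) + l.2.2 * tr (a 1 * a 2 * m)) ∧
      l.2.2 + l.1 * l.2.1 = tr (a 2 * k) + (l.1 * tr (a 0 * a 2 * m) + l.2.1 * tr (a 1 * a 2 * m) + l.2.2 * tr (a 2 ^ 2 * m))) := by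
      apply Finset.filter_congr
      intro l _
      have ht : ∀ i, tr (a i * (k + m * y l)) = tr (a i * k) + (l.1 * tr (a i * a 0 * m)
          + l.2.1 * tr (a i * a 1 * m) + l.2.2 * tr (a i * a 2 * m)) := by
        intro i
        have hsm : ∀ (c : ZMod 2) (x : K), c * tr x = tr (c • x) := fun c x => by
          rw [map_smul, smul_eq_mul]
        rw [hsm, hsm, hsm, ← map_add, ← map_add, ← map_add]
        congr 1
        simp only [y, Algebra.smul_def]
        ring
      simp only [ht, Fin.forall_fin_succ, q8f]
      simp [pow_two, mul_comm (a 1) (a 0), mul_comm (a 2) (a 0), mul_comm (a 2) (a 1)]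
    rw [e1, e2, Set.ncard_image_of_injective _ (fun l l' hl => (Prod.mk.inj hl).1),
      Set.ncard_coe_finset]
    by_cases hm : m ∈ S0
    · have : {x ∈ S0 | x = m} = {m} := by
        ext x; simp only [Set.mem_setOf_eq, Set.mem_singleton_iff]
        exact ⟨fun hx => hx.2, fun hx => ⟨hx ▸ hm, hx⟩⟩
      right; left
      rw [this, Set.ncard_singleton]
      have hd := q8_dec1 (tr (a 0 * a 1 * m)) (tr (a 0 * a 2 * m)) (tr (a 1 * a 2 * m))
        (tr (a 0 * k)) (tr (a 1 * k)) (tr (a 2 * k))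
      have hF : F.card = 1 := by
        rw [← hd, e3]
        simp [show ∀ i, tr (a i ^ 2 * m) = 0 from hm]
      rw [hF]
    · have : {x ∈ S0 | x = m} = ∅ := by
        ext x; simp only [Set.mem_setOf_eq, Set.mem_empty_iff_false, iff_false]
        rintro ⟨hx, rfl⟩; exact hm hx
      rw [this, Set.ncard_empty, zero_add]
      have hd := q8_dec2 (tr (a 0 ^ 2 * m)) (tr (a 1 ^ 2 * m)) (tr (a 2 ^ 2 * m))
        (tr (a 0 * a 1 * m)) (tr (a 0 * a 2 * m)) (tr (a 1 * a 2 * m))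
        (tr (a 0 * k)) (tr (a 1 * k)) (tr (a 2 * k)) (by
          rintro ⟨h0, h1, h2⟩
          apply hm
          intro i
          fin_cases i
          exacts [h0, h1, h2])
      rw [e3]
      rcases hd with hd | hd
      · left; convert hd
      · right; left; convert hd
end
end

section
/- Let q = 2^h with h ≥ 4. Let {α₁, α₂, α₃} and {α'₁, α'₂, α'₃} be two F_2-independent subsets of F_q \ {0} with the same F_2-span, ⟨α₁,α₂,α₃⟩ = ⟨α'₁,α'₂,α'₃⟩. Let A be a point set produced by the q/8-construction from (α₁,α₂,α₃) (with some admissible choice of β₁,β₂,β₃) and let A' be one produced from (α'₁,α'₂,α'₃) (with some admissible choice of β'₁,β'₂,β'₃). Then A and A' are PGL-equivalent: there exists M ∈ GL(3,q) whose induced projectivity of PG(2,q) (sending the point spanned by v ∈ F_q³ to the point spanned by M·v) maps A onto A'. -/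
open scoped Classical

noncomputable section

variable {K : Type*} [Field K]

set_option synthInstance.maxHeartbeats 2000000 in
set_option synthInstance.maxSize 100000 in
set_option maxRecDepth 100000 in
/-- Boolean form: an injective `3 × 3` system over the two-element field is surjective. -/
theorem q8_surj_bool : ∀ g00 g01 g02 g10 g11 g12 g20 g21 g22 : Bool,
    (∀ u v w : Bool, (((u && g00) ^^ (v && g10)) ^^ (w && g20)) = false → (((u && g01) ^^ (v && g11)) ^^ (w && g21)) = false →
      (((u && g02) ^^ (v && g12)) ^^ (w && g22)) = false → u = false ∧ v = false ∧ w = false) →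
    (∀ x y z : Bool, ∃ u v w : Bool, (((u && g00) ^^ (v && g10)) ^^ (w && g20)) = x ∧
      (((u && g01) ^^ (v && g11)) ^^ (w && g21)) = y ∧ (((u && g02) ^^ (v && g12)) ^^ (w && g22)) = z) := by
  decide +kernel

set_option synthInstance.maxHeartbeats 2000000 in
set_option synthInstance.maxSize 100000 in
set_option maxRecDepth 100000 in
/-- Boolean form of the finite combinatorial core: a change of basis over the two-element field is
absorbed by a translation. -/
theorem q8_core_bool : ∀ g00 g01 g02 g10 g11 g12 g20 g21 g22 : Bool,
    (∀ u v w : Bool, (((u && g00) ^^ (v && g10)) ^^ (w && g20)) = false → (((u && g01) ^^ (v && g11)) ^^ (w && g21)) = false →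
      (((u && g02) ^^ (v && g12)) ^^ (w && g22)) = false → u = false ∧ v = false ∧ w = false) →
    ∃ c0 c1 c2 e0 : Bool, e0 = (((c0 ^^ c1) ^^ c2) ^^ (c1 && c2)) ∧ ∃ e1, e1 = ((c1 ^^ c2) ^^ (c0 && c2)) ∧
      ∃ e2, e2 = (c2 ^^ (c0 && c1)) ∧ ∀ u v w x : Bool,
      ((((u && g00) ^^ (v && g10)) ^^ (w && g20)) ^^ c0) = x → ∀ y, ((((u && g01) ^^ (v && g11)) ^^ (w && g21)) ^^ c1) = y →
      ∀ z, ((((u && g02) ^^ (v && g12)) ^^ (w && g22)) ^^ c2) = z →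
      ∀ r, ((((x ^^ y) ^^ z) ^^ (y && z)) ^^ e0) = r → ∀ s, (((y ^^ z) ^^ (x && z)) ^^ e1) = s → ∀ t, ((z ^^ (x && y)) ^^ e2) = t →
      (((g00 && r) ^^ (g01 && s)) ^^ (g02 && t)) = (((u ^^ v) ^^ w) ^^ (v && w)) ∧
      (((g10 && r) ^^ (g11 && s)) ^^ (g12 && t)) = ((v ^^ w) ^^ (u && w)) ∧
      (((g20 && r) ^^ (g21 && s)) ^^ (g22 && t)) = (w ^^ (u && v)) := by
  decide +kernel

/-- The identification of the Booleans with the two-element field. -/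
def bz (b : Bool) : ZMod 2 := if b then 1 else 0

theorem bz_add (b c : Bool) : bz b + bz c = bz (b ^^ c) := by revert b c; decide
theorem bz_mul (b c : Bool) : bz b * bz c = bz (b && c) := by revert b c; decide
theorem bz_zero : (0 : ZMod 2) = bz false := rfl
theorem bz_inj (b c : Bool) : bz b = bz c ↔ b = c := by revert b c; decide
theorem bz_surj : Function.Surjective bz := by decide

/-- An injective `3 × 3` system over the two-element field is surjective. -/
theorem q8_surj_s14 : ∀ g00 g01 g02 g10 g11 g12 g20 g21 g22 : ZMod 2,
    (∀ u v w : ZMod 2, u * g00 + v * g10 + w * g20 = 0 → u * g01 + v * g11 + w * g21 = 0 →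
      u * g02 + v * g12 + w * g22 = 0 → u = 0 ∧ v = 0 ∧ w = 0) →
    (∀ x y z : ZMod 2, ∃ u v w : ZMod 2, u * g00 + v * g10 + w * g20 = x ∧
      u * g01 + v * g11 + w * g21 = y ∧ u * g02 + v * g12 + w * g22 = z) := by
  simp only [bz_surj.forall, bz_surj.exists, bz_add, bz_mul, bz_zero, bz_inj]
  exact q8_surj_bool

/-- The finite combinatorial core: a change of basis over the two-element field is
absorbed by a translation. -/
theorem q8_core : ∀ g00 g01 g02 g10 g11 g12 g20 g21 g22 : ZMod 2,
    (∀ u v w : ZMod 2, u * g00 + v * g10 + w * g20 = 0 → u * g01 + v * g11 + w * g21 = 0 →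
      u * g02 + v * g12 + w * g22 = 0 → u = 0 ∧ v = 0 ∧ w = 0) →
    ∃ c0 c1 c2 e0 : ZMod 2, e0 = c0 + c1 + c2 + c1 * c2 ∧ ∃ e1, e1 = c1 + c2 + c0 * c2 ∧
      ∃ e2, e2 = c2 + c0 * c1 ∧ ∀ u v w x : ZMod 2,
      u * g00 + v * g10 + w * g20 + c0 = x → ∀ y, u * g01 + v * g11 + w * g21 + c1 = y →
      ∀ z, u * g02 + v * g12 + w * g22 + c2 = z →
      ∀ r, x + y + z + y * z + e0 = r → ∀ s, y + z + x * z + e1 = s → ∀ t, z + x * y + e2 = t →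
      g00 * r + g01 * s + g02 * t = u + v + w + v * w ∧
      g10 * r + g11 * s + g12 * t = v + w + u * w ∧
      g20 * r + g21 * s + g22 * t = w + u * v := by
  simp only [bz_surj.forall, bz_surj.exists, bz_add, bz_mul, bz_zero, bz_inj]
  exact q8_core_bool


theorem Tr_add {K : Type*} [Field K] [CharP K 2] (h : ℕ) (x y : K) :
    Tr h (x + y) = Tr h x + Tr h y := by
  unfold Tr
  rw [← Finset.sum_add_distrib]
  exact Finset.sum_congr rfl fun i _ => add_pow_char_pow x y 2 i

theorem z2_self : ∀ t : ZMod 2, t + t = 0 := by decide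

theorem z2_cases : ∀ t : ZMod 2, t = 0 ∨ t = 1 := by decide

theorem Tr_zmul {K : Type*} [Field K] (h : ℕ) (p : ZMod 2 →+* K) (t : ZMod 2) (x : K) :
    Tr h (p t * x) = p t * Tr h x := by
  rcases z2_cases t with rfl | rfl
  · simp [Tr]
  · simp

/-- Zero-one valued tuples are images of tuples over the prime field. -/
theorem lift01 {K : Type*} [Field K] (p : ZMod 2 →+* K) (c : Fin 3 → K)
    (hc : ∀ i, c i = 0 ∨ c i = 1) : ∃ t : Fin 3 → ZMod 2, ∀ i, c i = p (t i) := by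
  have : ∀ i, ∃ t : ZMod 2, c i = p t := fun i => by
    rcases hc i with h | h
    · exact ⟨0, by simp [h]⟩
    · exact ⟨1, by simp [h]⟩
  choose t ht using this
  exact ⟨t, ht⟩

theorem p01 {K : Type*} [Field K] (p : ZMod 2 →+* K) (t : ZMod 2) : p t = 0 ∨ p t = 1 := by
  rcases z2_cases t with rfl | rfl <;> simp

/-- Membership of a point at infinity or of an affine point, in terms of traces. -/
def q8Arc2 {K : Type*} [Field K] (h : ℕ) (p : ZMod 2 →+* K) (a : Fin 3 → K) : Set (Pt K) :=
  {P | ∃ x : K, (∀ i, Tr h (a i ^ 2 * x) = 0) ∧ P = pt3 0 1 x (by simp)}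
    ∪ {P | ∃ u v w : ZMod 2, ∃ z : K,
        Tr h (a 0 * z) = p (u + v + w + v * w) ∧ Tr h (a 1 * z) = p (v + w + u * w) ∧
        Tr h (a 2 * z) = p (w + u * v) ∧
        P = pt3 1 (p u * a 0 + p v * a 1 + p w * a 2) z (by simp)}

theorem Tr_comb {K : Type*} [Field K] [CharP K 2] (h : ℕ) (p : ZMod 2 →+* K) (a b : Fin 3 → K)
    (htr : ∀ i j, Tr h (a i * b j) = if i = j then 1 else 0) (u v w : ZMod 2) (i : Fin 3) :
    Tr h (a i * (p u * b 0 + p v * b 1 + p w * b 2)) = p (![u, v, w] i) := by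
  have e : a i * (p u * b 0 + p v * b 1 + p w * b 2)
      = p u * (a i * b 0) + p v * (a i * b 1) + p w * (a i * b 2) := by ring
  rw [e, Tr_add, Tr_add, Tr_zmul, Tr_zmul, Tr_zmul, htr, htr, htr]
  fin_cases i <;> simp

theorem q8Arc_eq {K : Type*} [Field K] [CharP K 2] (h : ℕ) (p : ZMod 2 →+* K) (a b : Fin 3 → K)
    (htr : ∀ i j, Tr h (a i * b j) = if i = j then 1 else 0) :
    q8Arc h a b = q8Arc2 h p a := by
  unfold q8Arc q8Arc2
  congr 1
  ext P
  constructor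
  · rintro ⟨l, hl, s, hs, rfl⟩
    obtain ⟨t, ht⟩ := lift01 p l hl
    have key : ∀ i, Tr h (a i * ((l 0 + l 1 + l 2 + l 1 * l 2) * b 0 + (l 1 + l 2 + l 0 * l 2) * b 1
            + (l 2 + l 0 * l 1) * b 2 + s)) =
        p (![t 0 + t 1 + t 2 + t 1 * t 2, t 1 + t 2 + t 0 * t 2, t 2 + t 0 * t 1] i) := fun i => by
      rw [← Tr_comb h p a b htr, mul_add, Tr_add, hs, add_zero]
      simp only [ht, map_add, map_mul]
    refine ⟨t 0, t 1, t 2, _, key 0, key 1, key 2, ?_⟩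
    simp only [ht]
  · rintro ⟨u, v, w, z, h0, h1, h2, rfl⟩
    refine ⟨![p u, p v, p w], ?_, z + (p (u + v + w + v * w) * b 0 + p (v + w + u * w) * b 1
      + p (w + u * v) * b 2), ?_, ?_⟩
    · intro i; fin_cases i <;> exact p01 p _
    · intro i
      rw [mul_add, Tr_add, Tr_comb h p a b htr]
      fin_cases i <;> simp only [Fin.zero_eta, Fin.mk_one, Fin.reduceFinMk, h0, h1, h2] <;>
        exact CharTwo.add_self_eq_zero _
    · congr 1
      simp only [map_add, map_mul, Matrix.cons_val_zero, Matrix.cons_val_one, Matrix.cons_val]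
      rw [add_comm z, ← add_assoc, CharTwo.add_self_eq_zero, zero_add]

/-- The translation `(x, y, z) ↦ (x, y + c x, z + e x)`. -/
def shear {K : Type*} [Field K] [CharP K 2] (c e : K) : (Fin 3 → K) ≃ₗ[K] (Fin 3 → K) :=
  LinearEquiv.ofInvolutive
    { toFun := fun v => ![v 0, v 1 + c * v 0, v 2 + e * v 0]
      map_add' := by
        intro v w
        ext i; fin_cases i <;> simp <;> ring
      map_smul' := by
        intro r v
        ext i; fin_cases i <;> simp <;> ring }
    (by
      intro v
      ext i
      fin_cases i <;> simp [add_assoc, CharTwo.add_self_eq_zero])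

theorem shear_apply {K : Type*} [Field K] [CharP K 2] (c e : K) (v : Fin 3 → K) :
    shear c e v = ![v 0, v 1 + c * v 0, v 2 + e * v 0] := rfl

theorem proj_shear {K : Type*} [Field K] [CharP K 2] (c e x y z : K) (hn) (hn') :
    projMap (shear c e) (pt3 x y z hn) = pt3 x (y + c * x) (z + e * x) hn' := by
  unfold projMap pt3
  rw [Projectivization.map_mk]
  rfl

theorem inf_transfer {K : Type*} [Field K] [CharP K 2] (h : ℕ) (p : ZMod 2 →+* K) (a a' : Fin 3 → K)
    (hg : ∀ i, a' i ∈ F2Span a) (x : K) (hx : ∀ i, Tr h (a i ^ 2 * x) = 0) (i : Fin 3) :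
    Tr h (a' i ^ 2 * x) = 0 := by
  obtain ⟨c, hc, e⟩ := hg i
  obtain ⟨t, ht⟩ := lift01 p c hc
  have h2 : ∀ t : ZMod 2, p t ^ 2 = p t := fun t => by
    rcases z2_cases t with rfl | rfl <;> simp
  have e2 : a' i ^ 2 * x = p (t 0) * (a 0 ^ 2 * x) + p (t 1) * (a 1 ^ 2 * x)
      + p (t 2) * (a 2 ^ 2 * x) := by
    rw [e, Fin.sum_univ_three, CharTwo.add_sq, CharTwo.add_sq, mul_pow, mul_pow, mul_pow]
    simp only [ht, h2]
    ring
  rw [e2, Tr_add, Tr_add, Tr_zmul, Tr_zmul, Tr_zmul, hx, hx, hx]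
  simp

theorem mem_span_self {K : Type*} [Field K] (a : Fin 3 → K) (i : Fin 3) : a i ∈ F2Span a := by
  refine ⟨fun j => if i = j then 1 else 0, fun j => ?_, by simp⟩
  by_cases hij : i = j <;> simp [hij]

/-- Lemma 4.9: two `q/8`-constructions whose defining triples have the
same `F₂`-span give PGL-equivalent point sets. -/
theorem q8_pgl_equiv
    {K : Type*} [Field K] [Fintype K] (h : ℕ) (hh : 4 ≤ h)
    (hcard : Fintype.card K = 2 ^ h)
    (a b a' b' : Fin 3 → K)
    (hind : F2Indep a) (ha : ∀ i, a i ≠ 0) (hb : ∀ i, b i ≠ 0)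
    (htr : ∀ i j, Tr h (a i * b j) = if i = j then 1 else 0)
    (hind' : F2Indep a') (ha' : ∀ i, a' i ≠ 0) (hb' : ∀ i, b' i ≠ 0)
    (htr' : ∀ i j, Tr h (a' i * b' j) = if i = j then 1 else 0)
    (hspan : F2Span a = F2Span a') :
    ∃ M : (Fin 3 → K) ≃ₗ[K] (Fin 3 → K),
      projMap M '' q8Arc h a b = q8Arc h a' b' := by
  have : Fact (Nat.Prime 2) := ⟨Nat.prime_two⟩
  have : CharP K 2 := charP_of_card_eq_prime_pow hcard
  let p : ZMod 2 →+* K := ZMod.castHom (dvd_refl 2) K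
  have hpi : Function.Injective p := p.injective
  have hs1 : ∀ i, a' i ∈ F2Span a := fun i => hspan ▸ mem_span_self a' i
  have hs2 : ∀ i, a i ∈ F2Span a' := fun i => hspan ▸ mem_span_self a i
  rw [q8Arc_eq h p a b htr, q8Arc_eq h p a' b' htr']
  have hg : ∀ i, ∃ t : Fin 3 → ZMod 2, a' i = p (t 0) * a 0 + p (t 1) * a 1 + p (t 2) * a 2 := by
    intro i
    obtain ⟨c, hc, e⟩ := hs1 i
    obtain ⟨t, ht⟩ := lift01 p c hc
    exact ⟨t, by rw [e, Fin.sum_univ_three, ht, ht, ht]⟩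
  choose g hg using hg
  have hcomb : ∀ u v w, p u * a' 0 + p v * a' 1 + p w * a' 2 =
      p (u * g 0 0 + v * g 1 0 + w * g 2 0) * a 0 + p (u * g 0 1 + v * g 1 1 + w * g 2 1) * a 1
      + p (u * g 0 2 + v * g 1 2 + w * g 2 2) * a 2 := by
    intro u v w
    rw [hg 0, hg 1, hg 2]
    simp only [map_add, map_mul]
    ring
  have htrc : ∀ i z, Tr h (a' i * z) = p (g i 0) * Tr h (a 0 * z) + p (g i 1) * Tr h (a 1 * z)
      + p (g i 2) * Tr h (a 2 * z) := by
    intro i z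
    rw [hg i, ← Tr_zmul, ← Tr_zmul, ← Tr_zmul, ← Tr_add, ← Tr_add]
    congr 1
    ring
  have hginj : ∀ u v w : ZMod 2, u * g 0 0 + v * g 1 0 + w * g 2 0 = 0 →
      u * g 0 1 + v * g 1 1 + w * g 2 1 = 0 →
      u * g 0 2 + v * g 1 2 + w * g 2 2 = 0 → u = 0 ∧ v = 0 ∧ w = 0 := by
    intro u v w h0 h1 h2
    have := hcomb u v w
    rw [h0, h1, h2] at this
    have k := hind' ![p u, p v, p w] (by intro i; fin_cases i <;> exact p01 p _)
      (by rw [Fin.sum_univ_three]; simpa using this)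
    have k0 := k 0
    have k1 := k 1
    have k2 := k 2
    simp only [Matrix.cons_val_zero, Matrix.cons_val_one, Matrix.cons_val] at k0 k1 k2
    exact ⟨(map_eq_zero p).1 k0, (map_eq_zero p).1 k1, (map_eq_zero p).1 k2⟩
  have hsurj := q8_surj_s14 _ _ _ _ _ _ _ _ _ hginj
  obtain ⟨c0, c1, c2, e0, -, e1, -, e2, -, hcore'⟩ := q8_core _ _ _ _ _ _ _ _ _ hginj
  have hcore := fun u v w x y z hx hy hz => hcore' u v w x hx y hy z hz _ rfl _ rfl _ rfl
  have hginv : ∀ x : ZMod 2, x + x = 0 := z2_self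
  set c : K := p c0 * a 0 + p c1 * a 1 + p c2 * a 2 with hcdef
  set e : K := p e0 * b 0 + p e1 * b 1 + p e2 * b 2 with hedef
  have hTe : ∀ i, Tr h (a i * e) = p (![e0, e1, e2] i) := Tr_comb h p a b htr e0 e1 e2
  have hinv : ∀ P, projMap (shear c e) (projMap (shear c e) P) = P := by
    intro P
    induction P using Projectivization.ind with
    | h v hv =>
      unfold projMap
      rw [Projectivization.map_mk, Projectivization.map_mk]
      congr 1
      exact (shear c e).left_inv v
  have hfwd : ∀ P ∈ q8Arc2 h p a, projMap (shear c e) P ∈ q8Arc2 h p a' := by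
    rintro P (⟨x, hx, rfl⟩ | ⟨x, y, z, s, h0, h1, h2, rfl⟩)
    · left
      refine ⟨x, inf_transfer h p a a' hs1 x hx, ?_⟩
      rw [proj_shear c e 0 1 x _ (by simp)]
      simp
    · right
      obtain ⟨u, v, w, k0, k1, k2⟩ := hsurj (x + c0) (y + c1) (z + c2)
      obtain ⟨r0, r1, r2⟩ := hcore u v w x y z (by rw [k0, add_assoc, hginv, add_zero])
        (by rw [k1, add_assoc, hginv, add_zero]) (by rw [k2, add_assoc, hginv, add_zero])
      have hz : ∀ i, Tr h (a' i * (s + e)) = p (g i 0 * (x + y + z + y * z + e0)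
          + g i 1 * (y + z + x * z + e1) + g i 2 * (z + x * y + e2)) := by
        intro i
        rw [htrc, mul_add (a 0) s e, mul_add (a 1) s e, mul_add (a 2) s e, Tr_add h (a 0 * s),
          Tr_add h (a 1 * s), Tr_add h (a 2 * s), hTe, hTe, hTe, h0, h1, h2]
        simp
      refine ⟨u, v, w, s + e, by rw [hz, r0], by rw [hz, r1], by rw [hz, r2], ?_⟩
      rw [proj_shear c e _ _ _ _ (by simp)]
      congr 1
      · rw [hcomb, k0, k1, k2, hcdef]
        simp only [map_add]
        ring
      · ring
  have hbwd : ∀ P ∈ q8Arc2 h p a', projMap (shear c e) P ∈ q8Arc2 h p a := by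
    rintro P (⟨x, hx, rfl⟩ | ⟨u, v, w, s, h0, h1, h2, rfl⟩)
    · left
      refine ⟨x, inf_transfer h p a' a hs2 x hx, ?_⟩
      rw [proj_shear c e 0 1 x _ (by simp)]
      simp
    · right
      obtain ⟨r0, r1, r2⟩ := hcore u v w _ _ _ rfl rfl rfl
      set x := u * g 0 0 + v * g 1 0 + w * g 2 0 + c0 with hx
      set y := u * g 0 1 + v * g 1 1 + w * g 2 1 + c1 with hy
      set z := u * g 0 2 + v * g 1 2 + w * g 2 2 + c2 with hz
      have hall : ∀ u' v' w' : ZMod 2,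
          Tr h ((p u' * a' 0 + p v' * a' 1 + p w' * a' 2) * s) =
            p (u' * (u + v + w + v * w) + v' * (v + w + u * w) + w' * (w + u * v)) := by
        intro u' v' w'
        rw [add_mul, add_mul, mul_assoc, mul_assoc, mul_assoc, Tr_add, Tr_add, Tr_zmul, Tr_zmul,
          Tr_zmul, h0, h1, h2]
        simp only [map_add, map_mul]
      have hj : ∀ t0 t1 t2 : ZMod 2, Tr h ((p t0 * a 0 + p t1 * a 1 + p t2 * a 2) * s) =
          p (t0 * (x + y + z + y * z + e0) + t1 * (y + z + x * z + e1) + t2 * (z + x * y + e2)) := by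
        intro t0 t1 t2
        obtain ⟨u', v', w', k0, k1, k2⟩ := hsurj t0 t1 t2
        rw [← k0, ← k1, ← k2, ← hcomb, hall, ← r0, ← r1, ← r2]
        congr 1
        ring
      have j0 := hj 1 0 0
      have j1 := hj 0 1 0
      have j2 := hj 0 0 1
      simp only [map_one, map_zero, one_mul, zero_mul, add_zero, zero_add] at j0 j1 j2
      have q0 := hTe 0
      have q1 := hTe 1
      have q2 := hTe 2
      simp only [Matrix.cons_val_zero, Matrix.cons_val_one, Matrix.cons_val] at q0 q1 q2
      refine ⟨x, y, z, s + e, ?_, ?_, ?_, ?_⟩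
      · rw [mul_add, Tr_add, j0, q0, ← map_add, add_assoc _ e0, hginv, add_zero]
      · rw [mul_add, Tr_add, j1, q1, ← map_add, add_assoc _ e1, hginv, add_zero]
      · rw [mul_add, Tr_add, j2, q2, ← map_add, add_assoc _ e2, hginv, add_zero]
      rw [proj_shear c e _ _ _ _ (by simp)]
      congr 1
      · rw [hcomb, hcdef, hx, hy, hz]
        simp only [map_add]
        ring
      · ring
  refine ⟨shear c e, ?_⟩
  ext P
  constructor
  · rintro ⟨Q, hQ, rfl⟩
    exact hfwd Q hQ
  · intro hP
    exact ⟨_, hbwd P hP, hinv P⟩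
end
end

section
/- Let q = 2^h with h ≥ 4, let α₁, α₂, α₃ ∈ F_q \ {0} be F_2-independent, let k ∈ F_q \ {0} and let φ be a field automorphism of F_q. Let A be a point set produced by the q/8-construction from (α₁, α₂, α₃) and let A' be one produced from (kφ(α₁), kφ(α₂), kφ(α₃)) (each with some admissible choice of the β's). Then A and A' are PΓL-equivalent: there exist a field automorphism ψ of F_q and M ∈ GL(3,q) such that the semilinear collineation of PG(2,q) sending the point spanned by (x,y,z) ∈ F_q³ to the point spanned by M·(ψ(x), ψ(y), ψ(z)) maps A onto A'. -/
open scoped Classical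

noncomputable section

variable {K : Type*} [Field K]

theorem q8aux_Tr_add [CharP K 2] (h : ℕ) (x y : K) : Tr h (x + y) = Tr h x + Tr h y := by
  unfold Tr
  rw [← Finset.sum_add_distrib]
  exact Finset.sum_congr rfl fun i _ => add_pow_char_pow x y 2 i

theorem q8aux_Tr_zero (h : ℕ) : Tr h (0 : K) = 0 := by
  unfold Tr
  exact Finset.sum_eq_zero fun i _ => zero_pow (by positivity)

theorem q8aux_Tr_mul (h : ℕ) (c x : K) (hc : c = 0 ∨ c = 1) : Tr h (c * x) = c * Tr h x := by
  rcases hc with rfl | rfl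
  · simp [q8aux_Tr_zero]
  · simp

theorem q8aux_Tr_map (h : ℕ) (φ : K ≃+* K) (x : K) : Tr h (φ x) = φ (Tr h x) := by
  unfold Tr
  simp [map_sum]

/-- The three Boolean functions of the construction. -/
def q8auxF (l : Fin 3 → K) : Fin 3 → K :=
  ![l 0 + l 1 + l 2 + l 1 * l 2, l 1 + l 2 + l 0 * l 2, l 2 + l 0 * l 1]

theorem q8aux_F01 [CharP K 2] (l : Fin 3 → K) (hl : ∀ i, l i = 0 ∨ l i = 1) (i : Fin 3) :
    q8auxF l i = 0 ∨ q8auxF l i = 1 := by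
  have h2 : (1 : K) + 1 = 0 := CharTwo.add_self_eq_zero 1
  rcases hl 0 with h0 | h0 <;> rcases hl 1 with h1 | h1 <;> rcases hl 2 with h3 | h3 <;>
    fin_cases i <;> simp [q8auxF, h0, h1, h3, h2]

theorem q8aux_arc [CharP K 2] (h : ℕ) (a b : Fin 3 → K)
    (htr : ∀ i j, Tr h (a i * b j) = if i = j then 1 else 0) :
    q8Arc h a b =
      {P | ∃ x : K, (∀ i, Tr h (a i ^ 2 * x) = 0) ∧ P = pt3 0 1 x (by simp)}
    ∪ {P | ∃ l : Fin 3 → K, (∀ i, l i = 0 ∨ l i = 1) ∧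
        ∃ z : K, (∀ i, Tr h (a i * z) = q8auxF l i) ∧
        P = pt3 1 (l 0 * a 0 + l 1 * a 1 + l 2 * a 2) z (by simp)} := by
  have key : ∀ l : Fin 3 → K, (∀ i, l i = 0 ∨ l i = 1) → ∀ s i,
      Tr h (a i * ((l 0 + l 1 + l 2 + l 1 * l 2) * b 0 + (l 1 + l 2 + l 0 * l 2) * b 1
            + (l 2 + l 0 * l 1) * b 2 + s)) = q8auxF l i + Tr h (a i * s) := by
    intro l hl s i
    have e : a i * ((l 0 + l 1 + l 2 + l 1 * l 2) * b 0 + (l 1 + l 2 + l 0 * l 2) * b 1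
            + (l 2 + l 0 * l 1) * b 2 + s) = q8auxF l 0 * (a i * b 0) + q8auxF l 1 * (a i * b 1)
            + q8auxF l 2 * (a i * b 2) + a i * s := by
      simp only [q8auxF, Matrix.cons_val]
      ring
    rw [e, q8aux_Tr_add, q8aux_Tr_add, q8aux_Tr_add, q8aux_Tr_mul h _ _ (q8aux_F01 l hl 0),
      q8aux_Tr_mul h _ _ (q8aux_F01 l hl 1), q8aux_Tr_mul h _ _ (q8aux_F01 l hl 2),
      htr, htr, htr]
    fin_cases i <;> simp
  unfold q8Arc
  congr 1
  ext P
  simp only [Set.mem_setOf_eq]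
  constructor
  · rintro ⟨l, hl, s, hs, rfl⟩
    exact ⟨l, hl, _, fun i => by rw [key l hl, hs, add_zero], rfl⟩
  · rintro ⟨l, hl, z, hz, rfl⟩
    refine ⟨l, hl, z - ((l 0 + l 1 + l 2 + l 1 * l 2) * b 0 + (l 1 + l 2 + l 0 * l 2) * b 1
            + (l 2 + l 0 * l 1) * b 2), fun i => ?_, ?_⟩
    · have := key l hl (z - ((l 0 + l 1 + l 2 + l 1 * l 2) * b 0
        + (l 1 + l 2 + l 0 * l 2) * b 1 + (l 2 + l 0 * l 1) * b 2)) i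
      rw [add_sub_cancel, hz] at this
      simpa using this
    · congr 1
      ring

theorem q8aux_frob_mk (ψ : K ≃+* K) (M : (Fin 3 → K) ≃ₗ[K] (Fin 3 → K)) (v w : Fin 3 → K)
    (hv : v ≠ 0) (hw : w ≠ 0) (c : K) (hc : c • w = M fun i => ψ (v i)) :
    frobMap ψ M (Projectivization.mk K v hv) = Projectivization.mk K w hw := by
  unfold frobMap
  rw [Projectivization.mk_eq_mk_iff']
  obtain ⟨u, hu⟩ := Projectivization.exists_smul_eq_mk_rep K v hv
  refine ⟨ψ u * c, ?_⟩
  rw [mul_smul, hc, ← map_smul, ← hu]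
  congr 1
  funext i
  simp [Units.smul_def]

/-- The diagonal matrix `diag(1, k, k⁻¹)`. -/
def q8auxM (k : K) (hk : k ≠ 0) : (Fin 3 → K) ≃ₗ[K] (Fin 3 → K) :=
  LinearEquiv.piCongrRight fun i => LinearEquiv.smulOfNeZero K K ((![1, k, k⁻¹] : Fin 3 → K) i)
    (by fin_cases i <;> simp [hk])

theorem q8aux_frob_zero (φ : K ≃+* K) (k : K) (hk : k ≠ 0) (x : K) :
    frobMap φ (q8auxM k hk) (pt3 0 1 x (by simp)) =
      pt3 0 1 (k⁻¹ * k⁻¹ * φ x) (by simp) := by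
  unfold pt3
  apply q8aux_frob_mk (c := k)
  funext i
  fin_cases i <;> simp [q8auxM] <;> field_simp

theorem q8aux_frob_one (φ : K ≃+* K) (k : K) (hk : k ≠ 0) (y z : K) :
    frobMap φ (q8auxM k hk) (pt3 1 y z (by simp)) =
      pt3 1 (k * φ y) (k⁻¹ * φ z) (by simp) := by
  unfold pt3
  apply q8aux_frob_mk (c := 1)
  funext i
  fin_cases i <;> simp [q8auxM]

/-- Lemma 4.10: the `q/8`-constructions built from `(α₁,α₂,α₃)` and from
`(kφ(α₁), kφ(α₂), kφ(α₃))` are PΓL-equivalent. -/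
theorem q8_pgammal_equiv
    {K : Type*} [Field K] [Fintype K] (h : ℕ) (hh : 4 ≤ h)
    (hcard : Fintype.card K = 2 ^ h)
    (a b b' : Fin 3 → K) (k : K) (hk : k ≠ 0) (φ : K ≃+* K)
    (hind : F2Indep a) (ha : ∀ i, a i ≠ 0) (hb : ∀ i, b i ≠ 0)
    (htr : ∀ i j, Tr h (a i * b j) = if i = j then 1 else 0)
    (hind' : F2Indep fun i => k * φ (a i)) (hb' : ∀ i, b' i ≠ 0)
    (htr' : ∀ i j, Tr h ((k * φ (a i)) * b' j) = if i = j then 1 else 0) :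
    ∃ (ψ : K ≃+* K) (M : (Fin 3 → K) ≃ₗ[K] (Fin 3 → K)),
      frobMap ψ M '' q8Arc h a b = q8Arc h (fun i => k * φ (a i)) b' := by
  haveI : CharP K 2 := by
    haveI : Fact (Nat.Prime 2) := ⟨Nat.prime_two⟩
    exact charP_of_card_eq_prime_pow hcard
  have hfix : ∀ c : K, c = 0 ∨ c = 1 → φ c = c := by
    rintro c (rfl | rfl) <;> simp
  refine ⟨φ, q8auxM k hk, ?_⟩
  rw [q8aux_arc h a b htr, q8aux_arc h _ b' htr', Set.image_union]
  have t0 : ∀ x i, Tr h ((k * φ (a i)) ^ 2 * (k⁻¹ * k⁻¹ * φ x)) = φ (Tr h (a i ^ 2 * x)) := by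
    intro x i
    rw [← q8aux_Tr_map]
    congr 1
    simp only [map_mul, map_pow]
    field_simp
  have t1 : ∀ x i, Tr h ((k * φ (a i)) * (k⁻¹ * φ x)) = φ (Tr h (a i * x)) := by
    intro x i
    rw [← q8aux_Tr_map]
    congr 1
    simp only [map_mul]
    field_simp
  have ty : ∀ l : Fin 3 → K, (∀ i, l i = 0 ∨ l i = 1) →
      k * φ (l 0 * a 0 + l 1 * a 1 + l 2 * a 2) =
        l 0 * (k * φ (a 0)) + l 1 * (k * φ (a 1)) + l 2 * (k * φ (a 2)) := by
    intro l hl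
    simp only [map_add, map_mul, hfix _ (hl _)]
    ring
  congr 1
  · ext P
    simp only [Set.mem_image, Set.mem_setOf_eq]
    constructor
    · rintro ⟨_, ⟨x, hx, rfl⟩, rfl⟩
      exact ⟨_, fun i => by rw [t0, hx, map_zero], q8aux_frob_zero φ k hk x⟩
    · rintro ⟨x, hx, rfl⟩
      have e : k⁻¹ * k⁻¹ * φ (φ.symm (k * k * x)) = x := by
        rw [RingEquiv.apply_symm_apply]
        field_simp
      refine ⟨_, ⟨φ.symm (k * k * x), fun i => ?_, rfl⟩, ?_⟩
      · apply φ.injective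
        rw [← t0, e, map_zero]
        exact hx i
      · rw [q8aux_frob_zero]
        congr 1
  · ext P
    simp only [Set.mem_image, Set.mem_setOf_eq]
    constructor
    · rintro ⟨_, ⟨l, hl, z, hz, rfl⟩, rfl⟩
      refine ⟨l, hl, k⁻¹ * φ z, fun i => ?_, ?_⟩
      · rw [t1, hz, hfix _ (q8aux_F01 l hl i)]
      · rw [q8aux_frob_one]
        congr 1
        exact ty l hl
    · rintro ⟨l, hl, z, hz, rfl⟩
      have e : k⁻¹ * φ (φ.symm (k * z)) = z := by
        rw [RingEquiv.apply_symm_apply]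
        field_simp
      refine ⟨_, ⟨l, hl, φ.symm (k * z), fun i => ?_, rfl⟩, ?_⟩
      · apply φ.injective
        rw [← t1, e, hfix _ (q8aux_F01 l hl i)]
        exact hz i
      · rw [q8aux_frob_one]
        congr 1
        exact ty l hl
end
end

section
/- Let q = 2^h and let α₁, α₂, α₃, α₄ ∈ F_q \ {0} be F_2-independent. If α_i²/α₄ ∈ ⟨α₁, α₂, α₃, α₄⟩ (the F_2-span) for i = 1, 2, 3, then there exists α ∈ ⟨α₁, α₂, α₃, α₄⟩ such that the set {α₁(α₁+α₄), α₂(α₂+α₄), α₃(α₃+α₄), α₄α} is F_2-independent. -/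
open scoped Classical

noncomputable section

variable {K : Type*} [Field K]

/-- Lemma 5.1: if `αᵢ²/α₄` lies in the `F₂`-span of `α₁,α₂,α₃,α₄` for
`i = 1,2,3`, then some `α` in that span makes
`{α₁(α₁+α₄), α₂(α₂+α₄), α₃(α₃+α₄), α₄α}` an `F₂`-independent set. -/
theorem q16_alpha_exists
    {K : Type*} [Field K] [Fintype K] (h : ℕ)
    (hcard : Fintype.card K = 2 ^ h)
    (a : Fin 4 → K) (hind : F2Indep a) (ha : ∀ i, a i ≠ 0)
    (hsq1 : a 0 ^ 2 / a 3 ∈ F2Span a)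
    (hsq2 : a 1 ^ 2 / a 3 ∈ F2Span a)
    (hsq3 : a 2 ^ 2 / a 3 ∈ F2Span a) :
    ∃ α ∈ F2Span a,
      F2Indep ![a 0 * (a 0 + a 3), a 1 * (a 1 + a 3), a 2 * (a 2 + a 3), a 3 * α] := by
  have h2 : (2 : K) = 0 := by
    have h1 : ((Fintype.card K : ℕ) : K) = 0 := Nat.cast_card_eq_zero K
    rw [hcard] at h1
    push_cast at h1
    by_contra hne
    exact pow_ne_zero h hne h1
  let φ : Bool → K := fun b => if b then 1 else 0
  have hφ : ∀ b, φ b = 0 ∨ φ b = 1 := by intro b; cases b <;> simp [φ]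
  have hφx : ∀ b c, φ (xor b c) = φ b - φ c := by
    intro b c
    cases b <;> cases c <;> simp [φ]
    linear_combination h2
  have key : ∃ c : Fin 4 → Bool, ∀ d : Fin 3 → Bool,
      a 3 * ∑ i, φ (c i) * a i ≠ ∑ j : Fin 3, φ (d j) * (a j.castSucc * (a j.castSucc + a 3)) := by
    by_contra! hcon
    choose g hg using hcon
    have hinj : Function.Injective g := by
      intro c c' hcc
      have h1 := hg c
      rw [hcc, ← hg c'] at h1
      have h3 := mul_left_cancel₀ (ha 3) h1
      have h4 := hind (fun i => φ (xor (c i) (c' i))) (fun i => hφ _) (by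
        simp only [hφx, sub_mul, Finset.sum_sub_distrib]
        rw [h3, sub_self])
      funext i
      have h5 := h4 i
      revert h5
      cases c i <;> cases c' i <;> simp [φ]
    have := Fintype.card_le_of_injective g hinj
    simp at this
  obtain ⟨c, hc⟩ := key
  refine ⟨∑ i, φ (c i) * a i, ⟨fun i => φ (c i), fun i => hφ _, rfl⟩, ?_⟩
  intro e he hsum
  simp only [Fin.sum_univ_four] at hsum
  simp at hsum
  have he3 : e 3 = 0 := by
    rcases he 3 with h3 | h3
    · exact h3
    exfalso
    have hd : ∀ i, ∃ b, φ b = e i := by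
      intro i
      rcases he i with h0 | h0
      · exact ⟨false, by simp [φ, h0]⟩
      · exact ⟨true, by simp [φ, h0]⟩
    choose d hd using hd
    apply hc (fun j => d j.castSucc)
    rw [Fin.sum_univ_three, Fin.sum_univ_four]
    simp only [hd]
    rw [h3] at hsum
    have e0 : (Fin.castSucc (0 : Fin 3) : Fin 4) = 0 := rfl
    have e1 : (Fin.castSucc (1 : Fin 3) : Fin 4) = 1 := rfl
    have e2 : (Fin.castSucc (2 : Fin 3) : Fin 4) = 2 := rfl
    rw [e0, e1, e2]
    linear_combination hsum - (e 0 * (a 0 * (a 0 + a 3)) + e 1 * (a 1 * (a 1 + a 3))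
      + e 2 * (a 2 * (a 2 + a 3))) * h2
  rw [he3] at hsum
  have sq : ∀ i, e i ^ 2 = e i := by
    intro i
    rcases he i with h0 | h0 <;> simp [h0]
  have hy : (e 0 * a 0 + e 1 * a 1 + e 2 * a 2)
      * (e 0 * a 0 + e 1 * a 1 + e 2 * a 2 + a 3) = 0 := by
    linear_combination hsum + a 0 ^ 2 * sq 0 + a 1 ^ 2 * sq 1 + a 2 ^ 2 * sq 2
      + (e 0 * a 0 * e 1 * a 1 + e 0 * a 0 * e 2 * a 2 + e 1 * a 1 * e 2 * a 2) * h2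
  rcases mul_eq_zero.mp hy with h0 | h0
  · exact hind e he (by rw [Fin.sum_univ_four, he3]; linear_combination h0)
  · exfalso
    have h5 := hind ![e 0, e 1, e 2, 1] (by
      intro i
      fin_cases i
      · exact he 0
      · exact he 1
      · exact he 2
      · exact Or.inr rfl) (by
      rw [Fin.sum_univ_four]
      simpa using h0) 3
    simp at h5
end
end

section
/- Let q = 2^h with h > 5, let α₁, α₂, α₃, α₄ ∈ F_q \ {0} be F_2-independent with α_i²/α₄ ∈ ⟨α₁,α₂,α₃,α₄⟩ for i = 1,2,3, let S = {x ∈ F_q : Tr(α_i x) = 0 for i = 1,...,4}, let α ∈ ⟨α₁,α₂,α₃,α₄⟩ be such that {α₁(α₁+α₄), α₂(α₂+α₄), α₃(α₃+α₄), α₄α} is F_2-independent, and let β₁, β₂, β₃ ∈ F_q \ {0} satisfy Tr(α_i β_j) = δ_ij for i = 1,...,4 and j = 1,2,3. Then the point set A produced by the q/16-construction from these data is a KM-arc of type q/16 in PG(2,q) whose q/16-nucleus is (0:0:1), and A is an elation KM-arc with elation line X = 0 (for every γ ∈ F_q the set {z : (1:γ:z) ∈ A} is empty or a coset of S). -/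
open scoped Classical

noncomputable section

variable {K : Type*} [Field K]

lemma pt3_onLine (a b c : K) (habc) (L : Submodule K (Fin 3 → K)) :
    OnLine (pt3 a b c habc) L ↔ ![a, b, c] ∈ L := by
  unfold OnLine pt3
  rw [Projectivization.submodule_mk, Submodule.span_singleton_le_iff_mem]

lemma pt3_one_inj {y z y' z' : K} (h1 h2) :
    pt3 1 y z h1 = pt3 1 y' z' h2 ↔ y = y' ∧ z = z' := by
  unfold pt3
  rw [Projectivization.mk_eq_mk_iff']
  constructor
  · rintro ⟨a, ha⟩
    have h0 := congrFun ha 0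
    have h1 := congrFun ha 1
    have h2 := congrFun ha 2
    simp at h0 h1 h2
    subst h0
    simp at h1 h2
    exact ⟨h1.symm, h2.symm⟩
  · rintro ⟨rfl, rfl⟩
    exact ⟨1, by simp⟩

lemma pt3_zero_inj {z z' : K} (h1 h2) :
    pt3 0 1 z h1 = pt3 0 1 z' h2 ↔ z = z' := by
  unfold pt3
  rw [Projectivization.mk_eq_mk_iff']
  constructor
  · rintro ⟨a, ha⟩
    have h1 := congrFun ha 1
    have h2 := congrFun ha 2
    simp at h1 h2
    subst h1
    simp at h2
    exact h2.symm
  · rintro rfl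
    exact ⟨1, by simp⟩

lemma pt3_zero_ne_one {x y z : K} (h1 h2) : pt3 0 1 x h1 ≠ pt3 1 y z h2 := by
  unfold pt3
  rw [Ne, Projectivization.mk_eq_mk_iff']
  rintro ⟨a, ha⟩
  have h0 := congrFun ha 0
  have h1 := congrFun ha 1
  simp at h0 h1
  subst h0
  simp at h1

lemma finrank_ker_three (f : (Fin 3 → K) →ₗ[K] K) (hf : f ≠ 0) :
    Module.finrank K (LinearMap.ker f) = 2 := by
  have h1 := LinearMap.finrank_range_add_finrank_ker f
  have h2 : LinearMap.range f = ⊤ := LinearMap.range_eq_top.2 (LinearMap.surjective hf)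
  rw [h2, finrank_top, Module.finrank_self, Module.finrank_fin_fun] at h1
  omega

lemma isLine_X0 : IsLine (lineX0 K) := by
  apply finrank_ker_three
  intro h
  have := congrArg (fun f => f ![1, 0, 0]) h
  simp at this

lemma line_cases (L : Submodule K (Fin 3 → K)) (hL : IsLine L) :
    L = lineX0 K ∨ (∃ γ, ∀ v, v ∈ L ↔ v 1 = γ * v 0) ∨
      ∃ m c, ∀ v, v ∈ L ↔ v 2 = m * v 1 + c * v 0 := by
  have hlt : L < ⊤ := by
    rw [lt_top_iff_ne_top]
    rintro rfl
    unfold IsLine at hL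
    rw [finrank_top, Module.finrank_fin_fun] at hL
    omega
  obtain ⟨f, hf, hle⟩ := Submodule.exists_le_ker_of_lt_top L hlt
  have hLk : L = LinearMap.ker f :=
    Submodule.eq_of_le_of_finrank_eq hle (by rw [finrank_ker_three f hf]; exact hL)
  set u := f ![1, 0, 0] with hu
  set v := f ![0, 1, 0] with hv
  set w := f ![0, 0, 1] with hw
  have hfx : ∀ x, f x = x 0 * u + x 1 * v + x 2 * w := by
    intro x
    have : x = x 0 • ![1, 0, 0] + x 1 • ![0, 1, 0] + x 2 • ![0, 0, 1] := by
      funext i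
      fin_cases i <;> simp
    conv_lhs => rw [this]
    simp only [map_add, map_smul, smul_eq_mul]
    rfl
  have hmem : ∀ x, x ∈ L ↔ x 0 * u + x 1 * v + x 2 * w = 0 := by
    intro x
    rw [hLk, LinearMap.mem_ker, hfx]
  by_cases hw0 : w = 0
  · by_cases hv0 : v = 0
    · left
      have hu0 : u ≠ 0 := by
        intro hu0
        apply hf
        ext x
        simp [hfx, hw0, hv0, hu0]
      ext x
      rw [hmem, lineX0, LinearMap.mem_ker]
      simp [hv0, hw0, hu0]
    · right; left
      refine ⟨-u / v, fun x => ?_⟩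
      rw [hmem, hw0]
      field_simp
      constructor <;> intro h <;> linear_combination h
  · right; right
    refine ⟨-v / w, -u / w, fun x => ?_⟩
    rw [hmem]
    field_simp
    constructor <;> intro h <;> linear_combination h

/-- Elation `(x, y, z) ↦ (x, y, z + s x)`. -/
def elat (s : K) : (Fin 3 → K) ≃ₗ[K] (Fin 3 → K) where
  toFun v := ![v 0, v 1, v 2 + s * v 0]
  invFun v := ![v 0, v 1, v 2 - s * v 0]
  map_add' v w := by
    funext i
    fin_cases i <;> simp
    ring
  map_smul' c v := by
    funext i
    fin_cases i <;> simp
    ring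
  left_inv v := by
    funext i
    fin_cases i <;> simp
  right_inv v := by
    funext i
    fin_cases i <;> simp

lemma elat_pt3 (s a b c : K) (h1) (h2) :
    projMap (elat s) (pt3 a b c h1) = pt3 a b (c + s * a) h2 := by
  unfold projMap pt3
  rw [Projectivization.map_mk]
  rfl

lemma elat_elation (s : K) : IsElationAxis (elat s) (lineX0 K) := by
  refine ⟨pt3 0 0 1 (by simp), isLine_X0, ?_, ?_, ?_⟩
  · rw [pt3_onLine]
    simp [lineX0]
  · intro P
    induction P using Projectivization.ind with
    | h v hv =>
      intro hP
      unfold OnLine at hP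
      rw [Projectivization.submodule_mk, Submodule.span_singleton_le_iff_mem] at hP
      have hv0 : v 0 = 0 := by simpa [lineX0] using hP
      unfold projMap
      rw [Projectivization.map_mk]
      congr 1
      funext i
      fin_cases i <;> simp [elat, hv0]
  · intro M hM hR P
    rw [pt3_onLine] at hR
    induction P using Projectivization.ind with
    | h v hv =>
      intro hP
      unfold OnLine at hP ⊢
      unfold projMap
      rw [Projectivization.map_mk]
      rw [Projectivization.submodule_mk, Submodule.span_singleton_le_iff_mem] at hP ⊢
      have : (elat s).toLinearMap v = v + (s * v 0) • ![0, 0, 1] := by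
        funext i
        fin_cases i <;> simp [elat]
      rw [this]
      exact M.add_mem hP (M.smul_mem _ hR)

/-- The point set built from affine part `T` and part at infinity `D`. -/
def geoArc (T : Set (K × K)) (D : Set K) : Set (Pt K) :=
  (fun x => pt3 0 1 x (by simp)) '' D ∪ (fun p : K × K => pt3 1 p.1 p.2 (by simp)) '' T

lemma mem_geo_one (T : Set (K × K)) (D : Set K) (y z : K) (h1) :
    pt3 1 y z h1 ∈ geoArc T D ↔ (y, z) ∈ T := by
  constructor
  · rintro (⟨x, hx, he⟩ | ⟨p, hp, he⟩)
    · exact absurd he (pt3_zero_ne_one _ _)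
    · obtain ⟨h1, h2⟩ := (pt3_one_inj _ _).1 he
      rw [← h1, ← h2]; exact hp
  · intro h
    exact Or.inr ⟨(y, z), h, rfl⟩

lemma geo_elation [Fintype K] (T : Set (K × K)) (D : Set K) (S : AddSubgroup K) (t : ℕ)
    (ht : 2 < t) (hT : T.ncard = Fintype.card K) (hD : D.ncard = t)
    (hS : (S : Set K).ncard = t)
    (h2 : ∀ γ, {z | (γ, z) ∈ T} = ∅ ∨ ∃ β, {z | (γ, z) ∈ T} = (fun s => β + s) '' (S : Set K))
    (h3 : ∀ m c y1 y2 y3, y1 ≠ y2 → y1 ≠ y3 → y2 ≠ y3 → (y1, m * y1 + c) ∈ T →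
      (y2, m * y2 + c) ∈ T → (y3, m * y3 + c) ∈ T → False)
    (h4 : ∀ m c y1 y2, m ∈ D → y1 ≠ y2 → (y1, m * y1 + c) ∈ T →
      (y2, m * y2 + c) ∈ T → False) :
    IsElationKMArc (Fintype.card K) t (geoArc T D) (pt3 0 0 1 (by simp)) (lineX0 K) := by
  have hi0 : Function.Injective (fun x : K => pt3 0 1 x (by simp)) :=
    fun x y hxy => (pt3_zero_inj _ _).1 hxy
  have hi1 : Function.Injective (fun p : K × K => pt3 1 p.1 p.2 (by simp)) :=
    fun x y hxy => Prod.ext_iff.2 ((pt3_one_inj _ _).1 hxy)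
  -- cardinality of fibres
  have hfib : ∀ γ z, (γ, z) ∈ T → {z | (γ, z) ∈ T}.ncard = t := by
    intro γ z hz
    rcases h2 γ with h | ⟨β, h⟩
    · have : z ∈ {z | (γ, z) ∈ T} := hz
      rw [h] at this; exact absurd this (Set.notMem_empty _)
    · rw [h, Set.ncard_image_of_injective _ (add_right_injective β), hS]
  -- splitting of the secant count
  have hsplit : ∀ D' : Set K, ∀ T' : Set (K × K),
      (geoArc T' D').ncard = D'.ncard + T'.ncard := by
    intro D' T'
    unfold geoArc
    rw [Set.ncard_union_eq _ (Set.toFinite _) (Set.toFinite _),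
      Set.ncard_image_of_injective _ hi0, Set.ncard_image_of_injective _ hi1]
    rw [Set.disjoint_left]
    rintro _ ⟨x, -, rfl⟩ ⟨p, -, he⟩
    exact pt3_zero_ne_one _ _ he.symm
  have hsec : ∀ L : Submodule K (Fin 3 → K), secantCount (geoArc T D) L =
      {x | x ∈ D ∧ ![0, 1, x] ∈ L}.ncard + {p : K × K | p ∈ T ∧ ![1, p.1, p.2] ∈ L}.ncard := by
    intro L
    rw [← hsplit]
    unfold secantCount
    congr 1
    ext P
    constructor
    · rintro ⟨(⟨x, hx, rfl⟩ | ⟨p, hp, rfl⟩), hL⟩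
      · exact Or.inl ⟨x, ⟨hx, (pt3_onLine _ _ _ _ _).1 hL⟩, rfl⟩
      · exact Or.inr ⟨p, ⟨hp, (pt3_onLine _ _ _ _ _).1 hL⟩, rfl⟩
    · rintro (⟨x, ⟨hx, hL⟩, rfl⟩ | ⟨p, ⟨hp, hL⟩, rfl⟩)
      · exact ⟨Or.inl ⟨x, hx, rfl⟩, (pt3_onLine _ _ _ _ _).2 hL⟩
      · exact ⟨Or.inr ⟨p, hp, rfl⟩, (pt3_onLine _ _ _ _ _).2 hL⟩
  -- X = 0
  have hcX : secantCount (geoArc T D) (lineX0 K) = t := by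
    rw [hsec]
    have e1 : {x | x ∈ D ∧ ![0, 1, x] ∈ lineX0 K} = D := by
      ext x; simp [lineX0]
    have e2 : {p : K × K | p ∈ T ∧ ![1, p.1, p.2] ∈ lineX0 K} = ∅ := by
      ext x; simp [lineX0]
    rw [e1, e2, hD]; simp
  -- vertical lines
  have hcV : ∀ L : Submodule K (Fin 3 → K), (∃ γ, ∀ v, v ∈ L ↔ v 1 = γ * v 0) →
      secantCount (geoArc T D) L = 0 ∨ secantCount (geoArc T D) L = t := by
    rintro L ⟨γ, hγ⟩
    rw [hsec]
    have e1 : {x | x ∈ D ∧ ![0, 1, x] ∈ L} = ∅ := by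
      ext x; simp [hγ]
    have e2 : {p : K × K | p ∈ T ∧ ![1, p.1, p.2] ∈ L} =
        (fun z => (γ, z)) '' {z | (γ, z) ∈ T} := by
      ext ⟨y, z⟩
      simp only [hγ, Set.mem_ofPred_eq, Set.mem_image, Prod.mk.injEq]
      constructor
      · rintro ⟨h, h'⟩
        have h' : y = γ := by simpa using h'
        subst h'
        exact ⟨z, h, rfl, rfl⟩
      · rintro ⟨z', h, rfl, rfl⟩
        exact ⟨h, by simp⟩
    rw [e1, e2, Set.ncard_image_of_injective _ (Prod.mk_right_injective γ)]
    by_cases hne : ∃ z, (γ, z) ∈ T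
    · obtain ⟨z, hz⟩ := hne
      right
      rw [hfib γ z hz]; simp
    · left
      have : {z | (γ, z) ∈ T} = ∅ := by
        ext z
        simp only [Set.mem_ofPred_eq, Set.mem_empty_iff_false, iff_false]
        exact fun h => hne ⟨z, h⟩
      rw [this]; simp
  -- other lines
  have hcO : ∀ L : Submodule K (Fin 3 → K), (∃ m c, ∀ v, v ∈ L ↔ v 2 = m * v 1 + c * v 0) →
      secantCount (geoArc T D) L = 0 ∨ secantCount (geoArc T D) L = 2 := by
    rintro L ⟨m, c, hmc⟩
    rw [hsec]
    have e2 : {p : K × K | p ∈ T ∧ ![1, p.1, p.2] ∈ L} =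
        (fun y => (y, m * y + c)) '' {y | (y, m * y + c) ∈ T} := by
      ext ⟨y, z⟩
      simp only [hmc, Set.mem_ofPred_eq, Set.mem_image, Prod.mk.injEq]
      constructor
      · rintro ⟨h, h'⟩
        have h' : z = m * y + c := by simpa using h'
        subst h'
        exact ⟨y, h, rfl, rfl⟩
      · rintro ⟨z', h, rfl, rfl⟩
        exact ⟨h, by simp⟩
    have hinj : Function.Injective (fun y => (y, m * y + c)) :=
      fun x y hxy => (Prod.ext_iff.1 hxy).1
    rw [e2, Set.ncard_image_of_injective _ hinj]
    by_cases hm : m ∈ D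
    · right
      have e1 : {x | x ∈ D ∧ ![0, 1, x] ∈ L} = {m} := by
        ext x
        simp only [hmc, Set.mem_ofPred_eq, Set.mem_singleton_iff]
        constructor
        · rintro ⟨_, h⟩
          simpa using h
        · rintro rfl
          exact ⟨hm, by simp⟩
      have hinjT : Set.InjOn (fun p : K × K => p.2 - m * p.1) T := by
        rintro ⟨y, z⟩ hp ⟨y', z'⟩ hp' he
        simp only at he
        have hz : z = m * y + (z - m * y) := by ring
        have hz' : z' = m * y' + (z - m * y) := by rw [he]; ring
        by_cases hyy : y = y'
        · subst hyy
          rw [hz', ← hz]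
        · exfalso
          refine h4 m (z - m * y) y y' hm hyy ?_ ?_
          · rw [← hz]; exact hp
          · rw [← hz']; exact hp'
      have himg : (fun p : K × K => p.2 - m * p.1) '' T = Set.univ := by
        apply Set.eq_of_subset_of_ncard_le (Set.subset_univ _)
        rw [hinjT.ncard_image, hT, Set.ncard_univ, Nat.card_eq_fintype_card]
      have hc : c ∈ (fun p : K × K => p.2 - m * p.1) '' T := by rw [himg]; trivial
      obtain ⟨⟨y, z⟩, hp, he⟩ := hc
      simp only at he
      have hz : z = m * y + c := by rw [← he]; ring
      have e3 : {y | (y, m * y + c) ∈ T} = {y} := by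
        ext y'
        simp only [Set.mem_ofPred_eq, Set.mem_singleton_iff]
        constructor
        · intro h
          by_contra hne
          exact h4 m c y' y hm hne h (hz ▸ hp)
        · rintro rfl
          exact hz ▸ hp
      rw [e1, e3]; simp
    · have e1 : {x | x ∈ D ∧ ![0, 1, x] ∈ L} = ∅ := by
        ext x
        simp only [hmc, Set.mem_ofPred_eq, Set.mem_empty_iff_false, iff_false]
        rintro ⟨h1, h⟩
        have : x = m := by simpa using h
        exact hm (this ▸ h1)
      rw [e1, Set.ncard_empty, zero_add]
      by_cases hne : ∃ y, (y, m * y + c) ∈ T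
      · right
        obtain ⟨y0, hy0⟩ := hne
        set z0 := m * y0 + c with hz0
        have hcardT' : {p : K × K | p ∈ T ∧ p.1 ≠ y0}.ncard + t = Fintype.card K := by
          have hf := hfib y0 z0 hy0
          rw [← hf, ← Set.ncard_image_of_injective {z | (y0, z) ∈ T} (Prod.mk_right_injective y0), ← hT,
            ← Set.ncard_union_eq _ (Set.toFinite _) (Set.toFinite _)]
          · congr 1
            ext ⟨y, z⟩
            simp only [Set.mem_union, Set.mem_ofPred_eq, Set.mem_image, Prod.mk.injEq]
            constructor
            · rintro (h | ⟨z', h, rfl, rfl⟩)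
              · exact h.1
              · exact h
            · intro h
              by_cases hy : y = y0
              · right
                subst hy
                exact ⟨z, h, rfl, rfl⟩
              · exact Or.inl ⟨h, hy⟩
          · rw [Set.disjoint_left]
            rintro _ ⟨_, h⟩ ⟨z', _, rfl⟩
            exact h rfl
        have key : ∀ y z s, y ≠ y0 → (z - z0) / (y - y0) = s → z = s * y + (z0 - s * y0) := by
          intro y z s hy hs
          have : y - y0 ≠ 0 := sub_ne_zero.2 hy
          rw [div_eq_iff this] at hs
          linear_combination hs
        have hinjT : Set.InjOn (fun p : K × K => (p.2 - z0) / (p.1 - y0))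
            {p : K × K | p ∈ T ∧ p.1 ≠ y0} := by
          rintro ⟨y, z⟩ ⟨hp, hy⟩ ⟨y', z'⟩ ⟨hp', hy'⟩ he
          simp only at he hy hy'
          have k1 := key y z _ hy rfl
          have k2 := key y' z' _ hy' he.symm
          set s := (z - z0) / (y - y0)
          by_cases hyy : y = y'
          · subst hyy
            rw [k2, ← k1]
          · exfalso
            refine h3 s (z0 - s * y0) y y' y0 hyy hy hy' ?_ ?_ ?_
            · rw [← k1]; exact hp
            · rw [← k2]; exact hp'
            · rw [add_sub_cancel]; exact hy0
        have hdisj : Disjoint ((fun p : K × K => (p.2 - z0) / (p.1 - y0)) ''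
            {p : K × K | p ∈ T ∧ p.1 ≠ y0}) D := by
          rw [Set.disjoint_left]
          rintro s ⟨⟨y, z⟩, ⟨hp, hy⟩, he⟩ hs
          simp only at he hy
          have k1 := key y z s hy he
          refine h4 s (z0 - s * y0) y y0 hs hy ?_ ?_
          · rw [← k1]; exact hp
          · rw [add_sub_cancel]; exact hy0
        have himg : (fun p : K × K => (p.2 - z0) / (p.1 - y0)) ''
            {p : K × K | p ∈ T ∧ p.1 ≠ y0} ∪ D = Set.univ := by
          apply Set.eq_of_subset_of_ncard_le (Set.subset_univ _)
          rw [Set.ncard_union_eq hdisj (Set.toFinite _) (Set.toFinite _),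
            hinjT.ncard_image, hD, hcardT', Set.ncard_univ,
            Nat.card_eq_fintype_card]
        have hmm : m ∈ (fun p : K × K => (p.2 - z0) / (p.1 - y0)) ''
            {p : K × K | p ∈ T ∧ p.1 ≠ y0} := by
          have : m ∈ (Set.univ : Set K) := trivial
          rw [← himg] at this
          exact this.resolve_right hm
        obtain ⟨⟨y, z⟩, ⟨hp, hy⟩, he⟩ := hmm
        simp only at he hy
        have k1 := key y z m hy he
        have hz : z = m * y + c := by rw [k1, hz0]; ring
        have e3 : {y | (y, m * y + c) ∈ T} = {y0, y} := by
          ext y'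
          simp only [Set.mem_ofPred_eq, Set.mem_insert_iff, Set.mem_singleton_iff]
          constructor
          · intro h
            by_contra! hne
            exact h3 m c y' y0 y hne.1 hne.2 hy.symm h hy0 (hz ▸ hp)
          · rintro (rfl | rfl)
            · exact hy0
            · exact hz ▸ hp
        rw [e3, Set.ncard_pair hy.symm]
      · left
        have : {y | (y, m * y + c) ∈ T} = ∅ := by
          ext z
          simp only [Set.mem_ofPred_eq, Set.mem_empty_iff_false, iff_false]
          exact fun h => hne ⟨z, h⟩
        rw [this]; simp
  refine ⟨⟨?_, ?_⟩, isLine_X0, ?_, ?_, ?_⟩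
  · rw [hsplit, hT, hD, add_comm]
  · intro L hL
    rcases line_cases L hL with rfl | hv | ho
    · exact Or.inr (Or.inr hcX)
    · exact (hcV L hv).imp id Or.inr
    · exact (hcO L ho).imp id Or.inl
  · rw [pt3_onLine]; simp [lineX0]
  · intro L hL hc
    rw [pt3_onLine]
    rcases line_cases L hL with rfl | ⟨γ, hγ⟩ | ho
    · simp [lineX0]
    · simp [hγ]
    · rcases hcO L ho with h | h <;> omega
  · intro L hL hc hne P hP hPL Q hQ hQL
    rcases line_cases L hL with rfl | ⟨γ, hγ⟩ | ho
    · exact absurd rfl hne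
    · have hform : ∀ P ∈ geoArc T D, OnLine P L →
          ∃ z, (γ, z) ∈ T ∧ P = pt3 1 γ z (by simp) := by
        rintro P (⟨x, hx, rfl⟩ | ⟨⟨y, z⟩, hp, rfl⟩) hL
        · rw [pt3_onLine, hγ] at hL
          simp at hL
        · rw [pt3_onLine, hγ] at hL
          have : y = γ := by simpa using hL
          subst this
          exact ⟨z, hp, rfl⟩
      obtain ⟨z, hz, rfl⟩ := hform P hP hPL
      obtain ⟨z', hz', rfl⟩ := hform Q hQ hQL
      have hs : z' - z ∈ S := by
        rcases h2 γ with h | ⟨β, h⟩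
        · have : z ∈ {z | (γ, z) ∈ T} := hz
          rw [h] at this; exact absurd this (Set.notMem_empty _)
        · have m1 : z ∈ {z | (γ, z) ∈ T} := hz
          have m2 : z' ∈ {z | (γ, z) ∈ T} := hz'
          rw [h] at m1 m2
          obtain ⟨s, hs, rfl⟩ := m1
          obtain ⟨s', hs', rfl⟩ := m2
          simpa using S.sub_mem hs' hs
      have htrans : ∀ s ∈ S, ∀ y w, (y, w) ∈ T → (y, w + s) ∈ T := by
        intro s hs y w hw
        rcases h2 y with h | ⟨β, h⟩
        · have : w ∈ {z | (y, z) ∈ T} := hw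
          rw [h] at this; exact absurd this (Set.notMem_empty _)
        · have m1 : w ∈ {z | (y, z) ∈ T} := hw
          rw [h] at m1
          obtain ⟨s', hs', rfl⟩ := m1
          have : β + s' + s ∈ {z | (y, z) ∈ T} := by
            rw [h]
            exact ⟨s' + s, S.add_mem hs' hs, by simp [add_assoc]⟩
          exact this
      have hstab : ∀ s ∈ S, ∀ P ∈ geoArc T D, projMap (elat s) P ∈ geoArc T D := by
        rintro s hs P (⟨x, hx, rfl⟩ | ⟨⟨y, w⟩, hp, rfl⟩)
        · simp only
          rw [elat_pt3 _ _ _ _ _ (by simp)]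
          exact Or.inl ⟨x, hx, by simp⟩
        · simp only
          rw [elat_pt3 _ _ _ _ _ (by simp), mem_geo_one]
          simpa using htrans s hs y w hp
      refine ⟨elat (z' - z), elat_elation _, ?_, ?_⟩
      · unfold Stabilises
        refine Set.eq_of_subset_of_ncard_le ?_ ?_ (Set.toFinite _)
        · rintro _ ⟨P, hP, rfl⟩
          exact hstab _ hs P hP
        · have hinj : Function.Injective (projMap (elat (z' - z))) :=
            Projectivization.map_injective _ _
          rw [Set.ncard_image_of_injective _ hinj]
      · rw [elat_pt3 _ _ _ _ _ (by simp), pt3_one_inj]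
        simp
    · rcases hcO L ho with h | h <;> omega

section algebraic

variable [Algebra (ZMod 2) K]

/-- The `F₂`-combination of `a` with coefficients `l`. -/
def yy {n : ℕ} (a : Fin n → K) (l : Fin n → ZMod 2) : K := ∑ i, l i • a i

/-- The coordinate polynomials of the construction (the fourth one is zero). -/
def ff (l : Fin 4 → ZMod 2) : Fin 4 → ZMod 2 :=
  ![l 0 + l 1 + l 2 + l 1 * l 2, l 1 + l 2 + l 0 * l 2, l 2 + l 0 * l 1, 0]

/-- The coset representative attached to `l`. -/
def gg (b : Fin 3 → K) (l : Fin 4 → ZMod 2) : K :=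
  ff l 0 • b 0 + ff l 1 • b 1 + ff l 2 • b 2

/-- The affine part of the arc. -/
def affT (τ : K →ₗ[ZMod 2] ZMod 2) (a : Fin 4 → K) (b : Fin 3 → K) : Set (K × K) :=
  {p | ∃ l, p.1 = yy a l ∧ ∀ i, τ (a i * (p.2 + gg b l)) = 0}

lemma zmod2_cases (c : ZMod 2) : c = 0 ∨ c = 1 := by
  revert c; decide

lemma sol_card [Fintype K] (h : ℕ) (hcard : Fintype.card K = 2 ^ h) (h4 : 4 ≤ h)
    (τ : K →ₗ[ZMod 2] ZMod 2) (hτ : ∀ x : K, x ≠ 0 → ∃ z, τ (x * z) ≠ 0)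
    (v : Fin 4 → K) (hv : ∀ l, yy v l = 0 → l = 0) (c : Fin 4 → ZMod 2) :
    {x | ∀ i, τ (v i * x) = c i}.ncard = 2 ^ h / 16 := by
  let φ : K →ₗ[ZMod 2] (Fin 4 → ZMod 2) :=
    LinearMap.pi (fun i => τ ∘ₗ LinearMap.mulLeft (ZMod 2) (v i))
  have hφ : ∀ x i, φ x i = τ (v i * x) := fun x i => rfl
  have hsurj : LinearMap.range φ = ⊤ := by
    by_contra hne
    obtain ⟨f, hf, hle⟩ := Submodule.exists_le_ker_of_lt_top _ (lt_top_iff_ne_top.2 hne)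
    apply hf
    have hf' : ∀ u, f u = ∑ i, u i * f (Pi.single i 1) := by
      intro u
      conv_lhs => rw [pi_eq_sum_univ' u]
      rw [map_sum]
      refine Finset.sum_congr rfl fun i _ => ?_
      rw [map_smul, smul_eq_mul]
    have hz : yy v (fun i => f (Pi.single i 1)) = 0 := by
      by_contra hz
      obtain ⟨z, hz⟩ := hτ _ hz
      apply hz
      have h1 : f (φ z) = 0 := hle ⟨z, rfl⟩
      rw [hf'] at h1
      rw [← h1, yy, Finset.sum_mul, map_sum]
      refine Finset.sum_congr rfl fun i _ => ?_
      rw [smul_mul_assoc, map_smul, hφ, smul_eq_mul, mul_comm]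
    have h0 := hv _ hz
    ext i
    simpa using congrFun h0 i
  have hfin : Module.finrank (ZMod 2) K = h := by
    have := Module.card_eq_pow_finrank (K := ZMod 2) (V := K)
    rw [hcard, ZMod.card] at this
    exact (Nat.pow_right_injective le_rfl this).symm
  have hker : Module.finrank (ZMod 2) (LinearMap.ker φ) = h - 4 := by
    have := LinearMap.finrank_range_add_finrank_ker φ
    rw [hsurj, finrank_top, Module.finrank_fin_fun, hfin] at this
    omega
  have hkc : (LinearMap.ker φ : Set K).ncard = 2 ^ h / 16 := by
    have := Module.natCard_eq_pow_finrank (K := ZMod 2) (V := LinearMap.ker φ)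
    rw [hker, Nat.card_zmod] at this
    rw [← Nat.card_coe_set_eq]
    refine this.trans ?_
    rw [show (16 : ℕ) = 2 ^ 4 by norm_num, Nat.pow_div h4 (by norm_num)]
  obtain ⟨x0, hx0⟩ := LinearMap.range_eq_top.1 hsurj c
  rw [← hkc, ← Set.ncard_image_of_injective (LinearMap.ker φ : Set K) (add_right_injective x0)]
  congr 1
  ext x
  constructor
  · intro hx
    refine ⟨x - x0, ?_, by simp⟩
    change φ (x - x0) = 0
    rw [map_sub, hx0, sub_eq_zero]
    funext i
    exact hx i
  · rintro ⟨s, hs, rfl⟩ i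
    have hs' : φ s = 0 := hs
    rw [← hφ]
    simp only [map_add, hs', add_zero, hx0]

lemma yy_add {n : ℕ} (a : Fin n → K) (l l' : Fin n → ZMod 2) :
    yy a (l + l') = yy a l + yy a l' := by
  simp [yy, add_smul, Finset.sum_add_distrib]

lemma tau_yy (τ : K →ₗ[ZMod 2] ZMod 2) {n : ℕ} (a : Fin n → K) (l : Fin n → ZMod 2) (x : K) :
    τ (yy a l * x) = ∑ i, l i * τ (a i * x) := by
  rw [yy, Finset.sum_mul, map_sum]
  refine Finset.sum_congr rfl fun i _ => ?_
  rw [smul_mul_assoc, map_smul, smul_eq_mul]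

lemma ff_key : ∀ x y z x' y' z' : ZMod 2, ¬ (x = x' ∧ y = y' ∧ z = z') →
    (x + x') * ((x + y + z + y * z) + (x' + y' + z' + y' * z'))
    + (y + y') * ((y + z + x * z) + (y' + z' + x' * z'))
    + (z + z') * ((z + x * y) + (z' + x' * y')) = 1 := by
  decide

lemma tau_gg (τ : K →ₗ[ZMod 2] ZMod 2) (a : Fin 4 → K) (b : Fin 3 → K)
    (hb : ∀ (i : Fin 4) (j : Fin 3), τ (a i * b j) = if (i : ℕ) = (j : ℕ) then 1 else 0)
    (l : Fin 4 → ZMod 2) (i : Fin 4) : τ (a i * gg b l) = ff l i := by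
  have h0 := hb i 0
  have h1 := hb i 1
  have h2 := hb i 2
  simp only [gg, mul_add, map_add, mul_smul_comm, map_smul, h0, h1, h2, smul_eq_mul]
  fin_cases i <;> simp [ff]

/-- The quadratic-looking but additive form `w ↦ τ(m w (w + d))`. -/
def QQ [CharP K 2] (τ : K →ₗ[ZMod 2] ZMod 2) (m d : K) : K →ₗ[ZMod 2] ZMod 2 where
  toFun w := τ (m * w * (w + d))
  map_add' x y := by
    rw [← map_add]
    congr 1
    linear_combination (m * x * y) * (CharTwo.two_eq_zero (R := K))
  map_smul' c x := by
    rcases zmod2_cases c with rfl | rfl <;> simp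

lemma QQ_yy [CharP K 2] (τ : K →ₗ[ZMod 2] ZMod 2) (m d : K) {n : ℕ} (a : Fin n → K)
    (l : Fin n → ZMod 2) : QQ τ m d (yy a l) = ∑ i, l i * QQ τ m d (a i) := by
  rw [yy, map_sum]
  refine Finset.sum_congr rfl fun i _ => ?_
  rw [map_smul, smul_eq_mul]

lemma pair_key [CharP K 2] (τ : K →ₗ[ZMod 2] ZMod 2) (a : Fin 4 → K) (b : Fin 3 → K)
    (hb : ∀ (i : Fin 4) (j : Fin 3), τ (a i * b j) = if (i : ℕ) = (j : ℕ) then 1 else 0)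
    (m c y y' : K) (hne : y ≠ y') (h1 : (y, m * y + c) ∈ affT τ a b)
    (h2 : (y', m * y' + c) ∈ affT τ a b) :
    (y + y' = a 3 ∧ ∀ i, τ (a i * (m * a 3)) = 0) ∨ QQ τ m (a 3) (y + y') = 1 := by
  obtain ⟨l, hl, hS⟩ := h1
  obtain ⟨l', hl', hS'⟩ := h2
  simp only at hl hl' hS hS'
  have hw : y + y' = yy a (l + l') := by rw [yy_add, hl, hl']
  have hE : ∀ i, τ (a i * (m * (y + y'))) = ff l i + ff l' i := by
    intro i
    rw [← tau_gg τ a b hb l i, ← tau_gg τ a b hb l' i, ← map_add]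
    have := congrArg₂ (· + ·) (hS i) (hS' i)
    simp only [← map_add, add_zero] at this
    rw [← sub_eq_zero, ← map_sub, ← this]
    congr 1
    linear_combination (-a i * c - a i * gg b l - a i * gg b l')
      * (CharTwo.two_eq_zero (R := K))
  by_cases he : l 0 = l' 0 ∧ l 1 = l' 1 ∧ l 2 = l' 2
  · left
    obtain ⟨e0, e1, e2⟩ := he
    have e3 : l 3 + l' 3 = 1 := by
      rcases zmod2_cases (l 3 + l' 3) with h | h
      · exfalso
        apply hne
        have h33 : l 3 = l' 3 := CharTwo.add_eq_zero.1 h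
        rw [hl, hl', yy, yy]
        simp [Fin.sum_univ_four, e0, e1, e2, h33]
      · exact h
    have hwa : y + y' = a 3 := by
      rw [hw, yy]
      simp [Fin.sum_univ_four, e0, e1, e2, e3, CharTwo.add_self_eq_zero]
    refine ⟨hwa, fun i => ?_⟩
    have := hE i
    rw [hwa] at this
    rw [this]
    have hff : ff l = ff l' := by
      simp [ff, e0, e1, e2]
    rw [hff]
    exact CharTwo.add_self_eq_zero _
  · right
    change τ (m * (y + y') * (y + y' + a 3)) = 1
    have e1 : m * (y + y') * (y + y' + a 3) =
        (y + y') * (m * (y + y')) + a 3 * (m * (y + y')) := by ring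
    rw [e1, map_add, hE 3]
    have e2 : τ ((y + y') * (m * (y + y'))) = ∑ i, (l + l') i * (ff l i + ff l' i) := by
      conv_lhs => rw [show (y + y') * (m * (y + y')) = yy a (l + l') * (m * (y + y')) by rw [← hw]]
      rw [tau_yy]
      simp only [hE]
    rw [e2, Fin.sum_univ_four]
    have := ff_key (l 0) (l 1) (l 2) (l' 0) (l' 1) (l' 2) he
    simpa [ff] using this

lemma QQ_zero [CharP K 2] (τ : K →ₗ[ZMod 2] ZMod 2) (a : Fin 4 → K) (m : K)
    (hsq : ∀ i, ∃ l, a i ^ 2 = a 3 * yy a l)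
    (hm : ∀ i, τ (a i * (m * a 3)) = 0) (l : Fin 4 → ZMod 2) :
    QQ τ m (a 3) (yy a l) = 0 := by
  rw [QQ_yy]
  refine Finset.sum_eq_zero fun i _ => ?_
  change _ * τ (m * a i * (a i + a 3)) = 0
  obtain ⟨c, hc⟩ := hsq i
  have e1 : m * a i * (a i + a 3) = yy a c * (m * a 3) + a i * (m * a 3) := by
    linear_combination m * hc
  rw [e1, map_add, hm, tau_yy]
  simp [hm]

lemma alg_main [CharP K 2] [Fintype K] (h : ℕ) (hh : 5 < h) (hcard : Fintype.card K = 2 ^ h)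
    (τ : K →ₗ[ZMod 2] ZMod 2) (hτ : ∀ x : K, x ≠ 0 → ∃ z, τ (x * z) ≠ 0)
    (a : Fin 4 → K) (b : Fin 3 → K) (α : K)
    (hind : ∀ l, yy a l = 0 → l = 0)
    (hsq : ∀ i, ∃ l, a i ^ 2 = a 3 * yy a l)
    (hα : ∃ l, α = yy a l)
    (hαind : ∀ l, yy ![a 0 * (a 0 + a 3), a 1 * (a 1 + a 3), a 2 * (a 2 + a 3), a 3 * α] l = 0 →
      l = 0)
    (hb : ∀ (i : Fin 4) (j : Fin 3), τ (a i * b j) = if (i : ℕ) = (j : ℕ) then 1 else 0)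
    (D : Set K) (hD : D = {x | τ (a 0 * (a 0 + a 3) * x) = 0 ∧ τ (a 1 * (a 1 + a 3) * x) = 0 ∧
      τ (a 2 * (a 2 + a 3) * x) = 0 ∧ τ (a 3 * α * x) = 1}) :
    IsElationKMArc (2 ^ h) (2 ^ h / 16) (geoArc (affT τ a b) D) (pt3 (0 : K) 0 1 (by simp))
      (lineX0 K) ∧
    ∀ γ : K, {z : K | (γ, z) ∈ affT τ a b} = ∅ ∨
      ∃ β : K, {z : K | (γ, z) ∈ affT τ a b}
        = (fun s => β + s) '' {x : K | ∀ i, τ (a i * x) = 0} := by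
  have hyinj : ∀ l l', yy a l = yy a l' → l = l' := by
    intro l l' hll
    have : l + l' = 0 := hind _ (by rw [yy_add, hll]; exact CharTwo.add_self_eq_zero _)
    funext i
    exact CharTwo.add_eq_zero.1 (congrFun this i)
  have hfib : ∀ l, {z : K | (yy a l, z) ∈ affT τ a b} =
      (fun s => gg b l + s) '' {x : K | ∀ i, τ (a i * x) = 0} := by
    intro l
    ext z
    constructor
    · rintro ⟨l', hl', hz⟩
      obtain rfl := hyinj _ _ hl'
      refine ⟨z + gg b l, hz, ?_⟩
      simp only
      linear_combination gg b l * (CharTwo.two_eq_zero (R := K))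
    · rintro ⟨s, hs, rfl⟩
      refine ⟨l, rfl, fun i => ?_⟩
      rw [← hs i]
      congr 1
      linear_combination a i * gg b l * (CharTwo.two_eq_zero (R := K))
  have h2 : ∀ γ : K, {z : K | (γ, z) ∈ affT τ a b} = ∅ ∨
      ∃ β : K, {z : K | (γ, z) ∈ affT τ a b}
        = (fun s => β + s) '' {x : K | ∀ i, τ (a i * x) = 0} := by
    intro γ
    by_cases hγ : ∃ l, γ = yy a l
    · obtain ⟨l, rfl⟩ := hγ
      exact Or.inr ⟨_, hfib l⟩
    · left
      ext z
      simp only [Set.mem_ofPred_eq, Set.mem_empty_iff_false, iff_false]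
      rintro ⟨l, hl, -⟩
      exact hγ ⟨l, hl⟩
  refine ⟨?_, h2⟩
  let S : AddSubgroup K :=
    { carrier := {x : K | ∀ i, τ (a i * x) = 0}
      add_mem' := by
        intro x y hx hy i
        rw [mul_add, map_add, hx i, hy i, add_zero]
      zero_mem' := by
        intro i
        simp
      neg_mem' := by
        intro x hx i
        rw [mul_neg, map_neg, hx i, neg_zero] }
  have hScoe : (S : Set K) = {x : K | ∀ i, τ (a i * x) = 0} := rfl
  have hS : (S : Set K).ncard = 2 ^ h / 16 :=
    sol_card h hcard (by omega) τ hτ a hind (fun _ => 0)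
  have hDc : D.ncard = 2 ^ h / 16 := by
    rw [← sol_card h hcard (by omega) τ hτ _ hαind ![0, 0, 0, 1], hD]
    congr 1
    ext x
    simp [Fin.forall_fin_succ]
  have h16 : 2 ^ h / 16 = 2 ^ (h - 4) := by
    rw [show (16 : ℕ) = 2 ^ 4 by norm_num, Nat.pow_div (by omega) (by norm_num)]
  have ht : 2 < 2 ^ h / 16 := by
    rw [h16]
    calc 2 < 2 ^ 2 := by norm_num
      _ ≤ 2 ^ (h - 4) := Nat.pow_le_pow_right (by norm_num) (by omega)
  have hTc : (affT τ a b).ncard = Fintype.card K := by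
    have e : affT τ a b = (fun p : (Fin 4 → ZMod 2) × K => (yy a p.1, gg b p.1 + p.2)) ''
        (Set.univ ×ˢ (S : Set K)) := by
      ext ⟨y, z⟩
      constructor
      · rintro ⟨l, hl, hz⟩
        simp only at hl
        subst hl
        have : z ∈ {z : K | (yy a l, z) ∈ affT τ a b} := ⟨l, rfl, hz⟩
        rw [hfib] at this
        obtain ⟨s, hs, rfl⟩ := this
        exact ⟨(l, s), ⟨trivial, hs⟩, rfl⟩
      · rintro ⟨⟨l, s⟩, ⟨-, hs⟩, he⟩
        simp only [Prod.mk.injEq] at he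
        obtain ⟨rfl, rfl⟩ := he
        have : gg b l + s ∈ {z : K | (yy a l, z) ∈ affT τ a b} := by
          rw [hfib]
          exact ⟨s, hs, rfl⟩
        exact this
    rw [e, Set.ncard_image_of_injective, Set.ncard_prod, hS, Set.ncard_univ, hcard, h16]
    · simp only [Nat.card_eq_fintype_card, Fintype.card_pi, ZMod.card, Finset.prod_const,
        Finset.card_univ, Fintype.card_fin]
      rw [← pow_add]
      congr 1
      omega
    · rintro ⟨l, s⟩ ⟨l', s'⟩ he
      simp only [Prod.mk.injEq] at he
      obtain rfl := hyinj _ _ he.1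
      have := add_left_cancel he.2
      rw [this]
  have hV : ∀ m c y y', (y, m * y + c) ∈ affT τ a b → (y', m * y' + c) ∈ affT τ a b →
      ∃ l, y + y' = yy a l := by
    rintro m c y y' ⟨l, hl, -⟩ ⟨l', hl', -⟩
    simp only at hl hl'
    exact ⟨l + l', by rw [yy_add, hl, hl']⟩
  rw [← hcard]
  rw [← hcard] at ht hDc hS
  refine geo_elation (affT τ a b) D S _ ht hTc hDc hS h2 ?_ ?_
  · intro m c y1 y2 y3 n12 n13 n23 m1 m2 m3
    have k12 := pair_key τ a b hb m c y1 y2 n12 m1 m2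
    have k13 := pair_key τ a b hb m c y1 y3 n13 m1 m3
    have k23 := pair_key τ a b hb m c y2 y3 n23 m2 m3
    obtain ⟨l12, v12⟩ := hV m c y1 y2 m1 m2
    obtain ⟨l13, v13⟩ := hV m c y1 y3 m1 m3
    obtain ⟨l23, v23⟩ := hV m c y2 y3 m2 m3
    by_cases hz : ∀ i, τ (a i * (m * a 3)) = 0
    · have q := QQ_zero τ a m hsq hz
      rw [v12, q] at k12
      rw [v13, q] at k13
      have k12' := (k12.resolve_right (by decide)).1
      have k13' := (k13.resolve_right (by decide)).1
      apply n23
      rw [← v12] at k12'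
      rw [← v13] at k13'
      exact add_left_cancel (k12'.trans k13'.symm)
    · have q12 := k12.resolve_left (fun h => hz h.2)
      have q13 := k13.resolve_left (fun h => hz h.2)
      have q23 := k23.resolve_left (fun h => hz h.2)
      have hsum : y1 + y2 = (y1 + y3) + (y2 + y3) := by
        linear_combination (-y3) * (CharTwo.two_eq_zero (R := K))
      rw [hsum, map_add, q13, q23] at q12
      revert q12
      decide
  · intro m c y1 y2 hm n12 m1 m2
    rw [hD] at hm
    obtain ⟨d0, d1, d2, d3⟩ := hm
    obtain ⟨l, v⟩ := hV m c y1 y2 m1 m2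
    have hq : QQ τ m (a 3) (yy a l) = 0 := by
      rw [QQ_yy, Fin.sum_univ_four]
      have q : ∀ i, QQ τ m (a 3) (a i) = τ (a i * (a i + a 3) * m) := by
        intro i
        change τ (m * a i * (a i + a 3)) = _
        congr 1
        ring
      rw [q, q, q, q, d0, d1, d2, CharTwo.add_self_eq_zero]
      simp
    rcases pair_key τ a b hb m c y1 y2 n12 m1 m2 with ⟨-, hz⟩ | hz
    · obtain ⟨l', rfl⟩ := hα
      rw [show a 3 * yy a l' * m = yy a l' * (m * a 3) by ring, tau_yy] at d3
      simp [hz] at d3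
    · rw [v, hq] at hz
      exact absurd hz (by decide)

end algebraic

/-- Theorem 5.2: the `q/16`-construction yields an elation KM-arc of type
`q/16` in `PG(2,q)` with `q/16`-nucleus `(0:0:1)` and elation line `X = 0` (every set
`{z | (1:γ:z) ∈ A}` is empty or a coset of `S`). -/
theorem q16_construction
    {K : Type*} [Field K] [Fintype K] (h : ℕ) (hh : 5 < h)
    (hcard : Fintype.card K = 2 ^ h)
    (a : Fin 4 → K) (α : K) (b : Fin 3 → K)
    (hind : F2Indep a) (ha : ∀ i, a i ≠ 0)
    (hsq1 : a 0 ^ 2 / a 3 ∈ F2Span a)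
    (hsq2 : a 1 ^ 2 / a 3 ∈ F2Span a)
    (hsq3 : a 2 ^ 2 / a 3 ∈ F2Span a)
    (hαmem : α ∈ F2Span a)
    (hαind : F2Indep ![a 0 * (a 0 + a 3), a 1 * (a 1 + a 3), a 2 * (a 2 + a 3), a 3 * α])
    (hb : ∀ i, b i ≠ 0)
    (htr : ∀ (i : Fin 4) (j : Fin 3),
      Tr h (a i * b j) = if (i : ℕ) = (j : ℕ) then 1 else 0) :
    IsElationKMArc (2 ^ h) (2 ^ h / 16) (q16Arc h a α b) (pt3 (0 : K) 0 1 (by simp))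
      (lineX0 K) ∧
    ∀ γ : K, {z : K | pt3 1 γ z (by simp) ∈ q16Arc h a α b} = ∅ ∨
      ∃ β : K, {z : K | pt3 1 γ z (by simp) ∈ q16Arc h a α b}
        = (fun s => β + s) '' {x : K | ∀ i, Tr h (a i * x) = 0} := by
  haveI hchar : CharP K 2 := charP_of_card_eq_prime_pow hcard
  letI : Algebra (ZMod 2) K := ZMod.algebra K 2
  have hfin : Module.finrank (ZMod 2) K = h := by
    have := Module.card_eq_pow_finrank (K := ZMod 2) (V := K)
    rw [hcard, ZMod.card] at this
    exact (Nat.pow_right_injective le_rfl this).symm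
  set τ : K →ₗ[ZMod 2] ZMod 2 := Algebra.trace (ZMod 2) K with hτdef
  have hTr : ∀ x : K, Tr h x = algebraMap (ZMod 2) K (τ x) := by
    intro x
    rw [hτdef, FiniteField.algebraMap_trace_eq_sum_pow, hfin, Nat.card_zmod]
    rfl
  have hinj : Function.Injective (algebraMap (ZMod 2) K) := (algebraMap (ZMod 2) K).injective
  have hT0 : ∀ x : K, Tr h x = 0 ↔ τ x = 0 := by
    intro x
    rw [hTr, map_eq_zero_iff _ hinj]
  have hT1 : ∀ x : K, Tr h x = 1 ↔ τ x = 1 := by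
    intro x
    rw [hTr, map_eq_one_iff _ hinj]
  have hτ : ∀ x : K, x ≠ 0 → ∃ z, τ (x * z) ≠ 0 := by
    intro x hx
    by_contra! hc
    exact hx ((traceForm_nondegenerate (ZMod 2) K).1 x (fun z => hc z))
  have hyy : ∀ (n : ℕ) (v : Fin n → K) (l : Fin n → ZMod 2),
      yy v l = ∑ i, algebraMap (ZMod 2) K (l i) * v i := by
    intro n v l
    simp only [yy, Algebra.smul_def]
  have hbit : ∀ l : ZMod 2, algebraMap (ZMod 2) K l = 0 ∨ algebraMap (ZMod 2) K l = 1 := by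
    intro l
    rcases zmod2_cases l with rfl | rfl <;> simp
  have hlift : ∀ (n : ℕ) (c : Fin n → K), (∀ i, c i = 0 ∨ c i = 1) →
      ∃ l : Fin n → ZMod 2, ∀ i, c i = algebraMap (ZMod 2) K (l i) := by
    intro n c hc
    have : ∀ i, ∃ l : ZMod 2, c i = algebraMap (ZMod 2) K l := by
      intro i
      rcases hc i with h | h
      · exact ⟨0, by simp [h]⟩
      · exact ⟨1, by simp [h]⟩
    choose l hl using this
    exact ⟨l, hl⟩
  have hspan : ∀ x, x ∈ F2Span a → ∃ l, x = yy a l := by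
    rintro x ⟨c, hc, rfl⟩
    obtain ⟨l, hl⟩ := hlift _ c hc
    exact ⟨l, by rw [hyy]; simp only [hl]⟩
  have hindep : ∀ v : Fin 4 → K, F2Indep v → ∀ l, yy v l = 0 → l = 0 := by
    intro v hv l hl
    rw [hyy] at hl
    have := hv _ (fun i => hbit (l i)) hl
    funext i
    exact (map_eq_zero_iff _ hinj).1 (this i)
  have hdiv : ∀ i, a i ^ 2 / a 3 ∈ F2Span a → ∃ l, a i ^ 2 = a 3 * yy a l := by
    intro i hi
    obtain ⟨l, hl⟩ := hspan _ hi
    refine ⟨l, ?_⟩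
    rw [← hl, mul_div_cancel₀ _ (ha 3)]
  have hsq : ∀ i, ∃ l, a i ^ 2 = a 3 * yy a l := by
    intro i
    fin_cases i
    · exact hdiv 0 hsq1
    · exact hdiv 1 hsq2
    · exact hdiv 2 hsq3
    · refine ⟨Pi.single 3 1, ?_⟩
      simp [yy, Pi.single_apply, pow_two]
  have hb' : ∀ (i : Fin 4) (j : Fin 3),
      τ (a i * b j) = if (i : ℕ) = (j : ℕ) then 1 else 0 := by
    intro i j
    have := htr i j
    split_ifs at this ⊢
    · exact (hT1 _).1 this
    · exact (hT0 _).1 this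
  have hmain := alg_main h hh hcard τ hτ a b α (hindep a hind) hsq (hspan α hαmem)
    (hindep _ hαind) hb' _ rfl
  have hgg : ∀ l : Fin 4 → ZMod 2, gg b l =
      (algebraMap (ZMod 2) K (l 0) + algebraMap (ZMod 2) K (l 1) + algebraMap (ZMod 2) K (l 2)
        + algebraMap (ZMod 2) K (l 1) * algebraMap (ZMod 2) K (l 2)) * b 0
      + (algebraMap (ZMod 2) K (l 1) + algebraMap (ZMod 2) K (l 2)
        + algebraMap (ZMod 2) K (l 0) * algebraMap (ZMod 2) K (l 2)) * b 1
      + (algebraMap (ZMod 2) K (l 2)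
        + algebraMap (ZMod 2) K (l 0) * algebraMap (ZMod 2) K (l 1)) * b 2 := by
    intro l
    simp only [gg, ff, Algebra.smul_def, Matrix.cons_val_zero, Matrix.cons_val_one,
      Matrix.cons_val, map_add, map_mul]
  have harc : q16Arc h a α b = geoArc (affT τ a b)
      {x | τ (a 0 * (a 0 + a 3) * x) = 0 ∧ τ (a 1 * (a 1 + a 3) * x) = 0 ∧
      τ (a 2 * (a 2 + a 3) * x) = 0 ∧ τ (a 3 * α * x) = 1} := by
    unfold q16Arc geoArc
    simp only [hT0, hT1]
    congr 1
    · ext P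
      constructor
      · rintro ⟨x, x0, x1, x2, x3, rfl⟩
        exact ⟨x, ⟨x0, x1, x2, x3⟩, rfl⟩
      · rintro ⟨x, ⟨x0, x1, x2, x3⟩, rfl⟩
        exact ⟨x, x0, x1, x2, x3, rfl⟩
    · ext P
      constructor
      · rintro ⟨c, hc, s, hs, rfl⟩
        obtain ⟨l, hl⟩ := hlift _ c hc
        refine ⟨(yy a l, gg b l + s), ⟨l, rfl, fun i => ?_⟩, ?_⟩
        · rw [← hs i]
          congr 1
          linear_combination a i * gg b l * (CharTwo.two_eq_zero (R := K))
        · simp only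
          rw [pt3_one_inj, hyy, hgg, Fin.sum_univ_four]
          simp only [hl, and_self]
      · rintro ⟨⟨y, z⟩, ⟨l, hl, hz⟩, rfl⟩
        simp only at hl hz
        refine ⟨fun i => algebraMap (ZMod 2) K (l i), fun i => hbit (l i), z + gg b l, hz, ?_⟩
        simp only
        rw [pt3_one_inj, hl, hyy, ← hgg, Fin.sum_univ_four]
        refine ⟨rfl, ?_⟩
        linear_combination (-gg b l) * (CharTwo.two_eq_zero (R := K))
  rw [harc]
  simp only [mem_geo_one, hT0]
  exact hmain
end
end
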